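/- Dynamic gradual guarantee for λB′ (both variants): suppose M ⊑G N with M : Γ ⊢G A and N : Γ ⊢G B. Then: (1) if 𝒞'[N] ⟶* W for a value W, then 𝒞'[M] ⟶* V for some value V with V ⊑C W; (2) if 𝒞'[N] diverges, so does 𝒞'[M]; (3) if 𝒞'[M] ⟶* V for a value V, then either 𝒞'[N] ⟶* W for a value W with V ⊑C W, or 𝒞'[N] ⟶* blame ℓ for some label ℓ; (4) if 𝒞'[M] diverges, then either 𝒞'[N] diverges or 𝒞'[N] ⟶* blame ℓ for some ℓ. -/

import Mathlib

/-!
In `M ⊑ N` the term `N` carries the more precise types, so it performs more checks: whatever `M`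
does, `N` does too unless it ends in blame first. All four parts follow from one symmetric
statement: if *either* of two related terms halts, then (`Out`) the more precise one ends in
blame, or both end in related values, or both get stuck on a free variable (the terms may be
open). Since reduction is deterministic (`LBRed.det`), every term either halts or diverges, and
the outcome of a halting term is unique; the four parts are then read off by cases.

The invariant is the relation `SimRel`, a subrelation of term precision which contains all
pairs of compiled terms (`compile_rel`) and is closed under substitution. Its extra conditions
are that related variables have related types and that wraps enclose values; they make a wrap a
value and force the types of related terms to be related (`SimRel.ty`).

The symmetric statement (`simulation`) is proved by strong induction on a bound `n` for the
number of steps after which one of the two sides halts (`HE`), and for fixed `n` by induction on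
the derivation of `SimRel`. Three ingredients carry it.

* Casts always terminate on values, so no bound is needed for them: `castL`, `castR` and `castB`
  show that casting the left, the right, or both of two related values yields an outcome. The
  one-sided lemmas go by induction on the sizes of the types, because injections and projections
  factor through ground types. Canonical forms (`canon_unk_unk`, `canon_unk`) show that a value of
  type `?` below another value is an injection with the matching ground tag.
* The elimination lemmas `out_proj`, `out_app` and `out_case` treat a pair of related values in
  eliminating position, by induction on the number of outer wraps. A wrap on either side is
  peeled off by the reduction rule that decomposes the cast. Once no wraps remain, both sides
  take the same β-step, which strictly decreases `n`, and the outer induction applies to the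
  related results.
* The combinators `Out.bind`, `Out.bindL` and `Out.bindR` transport outcomes through evaluation
  frames, and `Halts.unplug` shows that a subterm in a frame halts if the whole term does.
-/

set_option maxHeartbeats 1000000

abbrev Label : Type := ℕ

inductive BaseTy : Type
  | nat | bool | int | unit | bot
deriving DecidableEq

inductive GType : Type
  | base (b : BaseTy)
  | unk
  | arr (A B : GType)
  | prod (A B : GType)
  | sum (A B : GType)
deriving DecidableEq

inductive Atomic : GType → Prop
  | base (b : BaseTy) : Atomic (.base b)
  | unk : Atomic .unk

inductive TyPrec : GType → GType → Prop
  | unk (A : GType) : TyPrec .unk A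
  | base (b : BaseTy) : TyPrec (.base b) (.base b)
  | arr : TyPrec A A' → TyPrec B B' → TyPrec (.arr A B) (.arr A' B')
  | prod : TyPrec A A' → TyPrec B B' → TyPrec (.prod A B) (.prod A' B')
  | sum : TyPrec A A' → TyPrec B B' → TyPrec (.sum A B) (.sum A' B')

inductive CtxPrec : List GType → List GType → Prop
  | nil : CtxPrec [] []
  | cons : TyPrec A A' → CtxPrec Γ Γ' → CtxPrec (A :: Γ) (A' :: Γ')

inductive Consis : GType → GType → Type
  | unkR (A : GType) : Consis A .unk
  | unkL (B : GType) : Consis .unk B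
  | base (b : BaseTy) : Consis (.base b) (.base b)
  | arr : Consis A' A → Consis B B' → Consis (.arr A B) (.arr A' B')
  | prod : Consis A A' → Consis B B' → Consis (.prod A B) (.prod A' B')
  | sum : Consis A A' → Consis B B' → Consis (.sum A B) (.sum A' B')

def Consis.join : ∀ {A B : GType}, Consis A B → GType
  | _, _, .unkR A => A
  | _, _, .unkL B => B
  | _, _, .base b => .base b
  | _, _, .arr c d => .arr c.join d.join
  | _, _, .prod c d => .prod c.join d.join
  | _, _, .sum c d => .sum c.join d.join

def Consis.refl : (A : GType) → Consis A A
  | .unk => .unkR .unk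
  | .base b => .base b
  | .arr A B => .arr (Consis.refl A) (Consis.refl B)
  | .prod A B => .prod (Consis.refl A) (Consis.refl B)
  | .sum A B => .sum (Consis.refl A) (Consis.refl B)

def Consis.symm : ∀ {A B : GType}, Consis A B → Consis B A
  | _, _, .unkR A => .unkL A
  | _, _, .unkL B => .unkR B
  | _, _, .base b => .base b
  | _, _, .arr c d => .arr c.symm d.symm
  | _, _, .prod c d => .prod c.symm d.symm
  | _, _, .sum c d => .sum c.symm d.symm

mutual
def Consis.joinL : ∀ {A B : GType}, (c : Consis A B) → Consis A c.join
  | _, _, .unkR A => Consis.refl A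
  | _, _, .unkL B => .unkL B
  | _, _, .base b => .base b
  | _, _, .arr c d => .arr (Consis.joinR c).symm (Consis.joinL d)
  | _, _, .prod c d => .prod (Consis.joinL c) (Consis.joinL d)
  | _, _, .sum c d => .sum (Consis.joinL c) (Consis.joinL d)

def Consis.joinR : ∀ {A B : GType}, (c : Consis A B) → Consis B c.join
  | _, _, .unkR A => .unkL A
  | _, _, .unkL B => Consis.refl B
  | _, _, .base b => .base b
  | _, _, .arr c d => .arr (Consis.joinL c).symm (Consis.joinR d)
  | _, _, .prod c d => .prod (Consis.joinR c) (Consis.joinR d)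
  | _, _, .sum c d => .sum (Consis.joinR c) (Consis.joinR d)
end

inductive GVar : List GType → GType → Type
  | z : GVar (A :: Γ) A
  | s : GVar Γ A → GVar (B :: Γ) A

def GVar.idx : ∀ {Γ A}, GVar Γ A → ℕ
  | _, _, .z => 0
  | _, _, .s x => x.idx + 1

inductive Prim : GType → Type
  | base (b : BaseTy) : Prim (.base b)
  | fn (b : BaseTy) {A : GType} : Prim A → Prim (.arr (.base b) A)

def BaseTy.rep : BaseTy → Type
  | .nat => ℕ
  | .bool => Bool
  | .int => ℤ
  | .unit => Unit
  | .bot => Empty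

def Prim.rep : ∀ {A : GType}, Prim A → Type
  | _, .base b => b.rep
  | _, .fn b p => b.rep → p.rep

def Consis.domArr : ∀ {A B C D : GType}, Consis (.arr A B) (.arr C D) → Consis C A
  | _, _, _, _, .arr c _ => c
def Consis.codArr : ∀ {A B C D : GType}, Consis (.arr A B) (.arr C D) → Consis B D
  | _, _, _, _, .arr _ d => d
def Consis.fstP : ∀ {A B C D : GType}, Consis (.prod A B) (.prod C D) → Consis A C
  | _, _, _, _, .prod c _ => c
def Consis.sndP : ∀ {A B C D : GType}, Consis (.prod A B) (.prod C D) → Consis B D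
  | _, _, _, _, .prod _ d => d
def Consis.inlS : ∀ {A B C D : GType}, Consis (.sum A B) (.sum C D) → Consis A C
  | _, _, _, _, .sum c _ => c
def Consis.inrS : ∀ {A B C D : GType}, Consis (.sum A B) (.sum C D) → Consis B D
  | _, _, _, _, .sum _ d => d
inductive MatchArr : GType → GType → GType → Type
  | arr (A B : GType) : MatchArr (.arr A B) A B
  | unk : MatchArr .unk .unk .unk

inductive MatchProd : GType → GType → GType → Type
  | prod (A B : GType) : MatchProd (.prod A B) A B
  | unk : MatchProd .unk .unk .unk

inductive MatchSum : GType → GType → GType → Type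
  | sum (A B : GType) : MatchSum (.sum A B) A B
  | unk : MatchSum .unk .unk .unk

def MatchArr.consis : ∀ {A A₁ A₂ : GType}, MatchArr A A₁ A₂ → Consis A (.arr A₁ A₂)
  | _, _, _, .arr A B => Consis.refl (.arr A B)
  | _, _, _, .unk => .unkL _

def MatchProd.consis : ∀ {A A₁ A₂ : GType}, MatchProd A A₁ A₂ → Consis A (.prod A₁ A₂)
  | _, _, _, .prod A B => Consis.refl (.prod A B)
  | _, _, _, .unk => .unkL _

def MatchSum.consis : ∀ {A A₁ A₂ : GType}, MatchSum A A₁ A₂ → Consis A (.sum A₁ A₂)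
  | _, _, _, .sum A B => Consis.refl (.sum A B)
  | _, _, _, .unk => .unkL _

inductive GTerm : List GType → GType → Type
  | const {Γ : List GType} {A : GType} (p : Prim A) (k : p.rep) : GTerm Γ A
  | var {Γ A} (x : GVar Γ A) : GTerm Γ A
  | lam {Γ B} (A : GType) (N : GTerm (A :: Γ) B) : GTerm Γ (.arr A B)
  | app {Γ A A₁ A₂ B} (L : GTerm Γ A) (M : GTerm Γ B) (ℓ : Label)
      (m : MatchArr A A₁ A₂) (cn : Consis A₁ B) : GTerm Γ A₂
  | ite {Γ A B C} (L : GTerm Γ A) (M : GTerm Γ B) (N : GTerm Γ C) (ℓ : Label)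
      (cb : Consis A (.base .bool)) (cn : Consis B C) : GTerm Γ cn.join
  | cons {Γ A B} (M : GTerm Γ A) (N : GTerm Γ B) : GTerm Γ (.prod A B)
  | fst {Γ A A₁ A₂} (M : GTerm Γ A) (ℓ : Label) (m : MatchProd A A₁ A₂) : GTerm Γ A₁
  | snd {Γ A A₁ A₂} (M : GTerm Γ A) (ℓ : Label) (m : MatchProd A A₁ A₂) : GTerm Γ A₂
  | inl {Γ A} (B : GType) (M : GTerm Γ A) : GTerm Γ (.sum A B)
  | inr {Γ B} (A : GType) (M : GTerm Γ B) : GTerm Γ (.sum A B)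
  | case {Γ A B₁ B₂ C₁ C₂} (L : GTerm Γ A) (M : GTerm (B₁ :: Γ) B₂) (N : GTerm (C₁ :: Γ) C₂)
      (ℓ : Label) (ca : Consis A (.sum B₁ C₁)) (bc : Consis B₂ C₂) : GTerm Γ bc.join

inductive GPrec : ∀ {Γ Γ' : List GType} {A A' : GType}, GTerm Γ A → GTerm Γ' A' → Prop
  | const {Γ Γ' : List GType} {A : GType} (p : Prim A) (k : p.rep) :
      GPrec (Γ := Γ) (Γ' := Γ') (.const p k) (.const p k)
  | var {Γ Γ' A A'} (x : GVar Γ A) (x' : GVar Γ' A') :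
      x.idx = x'.idx → GPrec (.var x) (.var x')
  | lam {Γ Γ' A A' B B'} {N : GTerm (A :: Γ) B} {N' : GTerm (A' :: Γ') B'} :
      TyPrec A A' → GPrec N N' → GPrec (.lam A N) (.lam A' N')
  | app {Γ Γ' A A' A₁ A₂ A₁' A₂' B B' ℓ ℓ'}
      {L : GTerm Γ A} {L' : GTerm Γ' A'} {M : GTerm Γ B} {M' : GTerm Γ' B'}
      {m : MatchArr A A₁ A₂} {m' : MatchArr A' A₁' A₂'} {cn : Consis A₁ B} {cn' : Consis A₁' B'} :
      GPrec L L' → GPrec M M' → GPrec (.app L M ℓ m cn) (.app L' M' ℓ' m' cn')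
  | ite {Γ Γ' A A' B B' C C' ℓ ℓ'}
      {L : GTerm Γ A} {L' : GTerm Γ' A'} {M : GTerm Γ B} {M' : GTerm Γ' B'}
      {N : GTerm Γ C} {N' : GTerm Γ' C'}
      {cb : Consis A (.base .bool)} {cb' : Consis A' (.base .bool)}
      {cn : Consis B C} {cn' : Consis B' C'} :
      GPrec L L' → GPrec M M' → GPrec N N' →
      GPrec (.ite L M N ℓ cb cn) (.ite L' M' N' ℓ' cb' cn')
  | cons {Γ Γ' A A' B B'} {M : GTerm Γ A} {M' : GTerm Γ' A'} {N : GTerm Γ B} {N' : GTerm Γ' B'} :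
      GPrec M M' → GPrec N N' → GPrec (.cons M N) (.cons M' N')
  | fst {Γ Γ' A A' A₁ A₂ A₁' A₂' ℓ ℓ'} {M : GTerm Γ A} {M' : GTerm Γ' A'}
      {m : MatchProd A A₁ A₂} {m' : MatchProd A' A₁' A₂'} :
      GPrec M M' → GPrec (.fst M ℓ m) (.fst M' ℓ' m')
  | snd {Γ Γ' A A' A₁ A₂ A₁' A₂' ℓ ℓ'} {M : GTerm Γ A} {M' : GTerm Γ' A'}
      {m : MatchProd A A₁ A₂} {m' : MatchProd A' A₁' A₂'} :
      GPrec M M' → GPrec (.snd M ℓ m) (.snd M' ℓ' m')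
  | inl {Γ Γ' A A' B B'} {M : GTerm Γ A} {M' : GTerm Γ' A'} :
      TyPrec B B' → GPrec M M' → GPrec (.inl B M) (.inl B' M')
  | inr {Γ Γ' A A' B B'} {M : GTerm Γ B} {M' : GTerm Γ' B'} :
      TyPrec A A' → GPrec M M' → GPrec (.inr A M) (.inr A' M')
  | case {Γ Γ' A A' B₁ B₂ C₁ C₂ B₁' B₂' C₁' C₂' ℓ ℓ'}
      {L : GTerm Γ A} {L' : GTerm Γ' A'}
      {M : GTerm (B₁ :: Γ) B₂} {M' : GTerm (B₁' :: Γ') B₂'}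
      {N : GTerm (C₁ :: Γ) C₂} {N' : GTerm (C₁' :: Γ') C₂'}
      {ca : Consis A (.sum B₁ C₁)} {ca' : Consis A' (.sum B₁' C₁')}
      {bc : Consis B₂ C₂} {bc' : Consis B₂' C₂'} :
      TyPrec B₁ B₁' → TyPrec C₁ C₁' → GPrec L L' → GPrec M M' → GPrec N N' →
      GPrec (.case L M N ℓ ca bc) (.case L' M' N' ℓ' ca' bc')

/-- Ground types. -/
inductive Ground : GType → Prop
  | base (b : BaseTy) : Ground (.base b)
  | arr : Ground (.arr .unk .unk)
  | prod : Ground (.prod .unk .unk)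
  | sum : Ground (.sum .unk .unk)

/-- λB casts: a source type, target type, blame label, and a consistency proof. -/
inductive LBCast : GType → GType → Type
  | mk (A B : GType) (ℓ : Label) (h : Consis A B) : LBCast A B

/-- Cross casts. -/
inductive LBCross : ∀ {A B : GType}, LBCast A B → Prop
  | arr {A B C D : GType} {ℓ h} : LBCross (.mk (.arr A B) (.arr C D) ℓ h)
  | prod {A B C D : GType} {ℓ h} : LBCross (.mk (.prod A B) (.prod C D) ℓ h)
  | sum {A B C D : GType} {ℓ h} : LBCross (.mk (.sum A B) (.sum C D) ℓ h)

/-- The two variants of λB: Variant 1 takes all cross casts to be inert;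
Variant 2 takes only function casts (among the cross casts) to be inert. -/
inductive LBVariant | v1 | v2

/-- Inert λB casts (per variant): injections from ground types are inert in both
variants; function casts are inert in both; pair and sum cross casts are inert
only in Variant 1. -/
inductive LBInert : LBVariant → ∀ {A B : GType}, LBCast A B → Prop
  | inj (v : LBVariant) {G : GType} {ℓ h} : Ground G → LBInert v (.mk G .unk ℓ h)
  | arr (v : LBVariant) {A B C D : GType} {ℓ h} :
      LBInert v (.mk (.arr A B) (.arr C D) ℓ h)
  | prod {A B C D : GType} {ℓ h} : LBInert .v1 (.mk (.prod A B) (.prod C D) ℓ h)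
  | sum {A B C D : GType} {ℓ h} : LBInert .v1 (.mk (.sum A B) (.sum C D) ℓ h)

/-- Active λB casts (per variant): identity casts on atomic types, injections
from non-ground non-`?` types, and projections are active in both variants;
pair and sum cross casts are active only in Variant 2. -/
inductive LBActive : LBVariant → ∀ {A B : GType}, LBCast A B → Prop
  | id (v : LBVariant) {a : GType} {ℓ h} : Atomic a → LBActive v (.mk a a ℓ h)
  | inj (v : LBVariant) {A : GType} {ℓ h} : A ≠ .unk → ¬ Ground A →
      LBActive v (.mk A .unk ℓ h)
  | proj (v : LBVariant) {B : GType} {ℓ h} : B ≠ .unk → LBActive v (.mk .unk B ℓ h)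
  | prod {A B C D : GType} {ℓ h} : LBActive .v2 (.mk (.prod A B) (.prod C D) ℓ h)
  | sum {A B C D : GType} {ℓ h} : LBActive .v2 (.mk (.sum A B) (.sum C D) ℓ h)

/-- Renamings. -/
def Ren (Γ Δ : List GType) : Type := ∀ A : GType, GVar Γ A → GVar Δ A

def Ren.ext {Γ Δ : List GType} (ρ : Ren Γ Δ) (B : GType) : Ren (B :: Γ) (B :: Δ) :=
  fun _ x =>
    match x with
    | .z => .z
    | .s y => .s (ρ _ y)

def shiftRen {Γ : List GType} (B : GType) : Ren Γ (B :: Γ) := fun _ x => .s x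

/-- Intrinsically-typed terms of the `CC′(⇒)` variant of the Parameterized Cast
Calculus: `case` has binding branches and there is a distinguished wrap
application `M⟪c⟫` for inert casts `c`. -/
inductive Tm' (Cast : GType → GType → Type) (Inert : ∀ A B : GType, Cast A B → Prop) :
    List GType → GType → Type
  | const {Γ : List GType} {A : GType} (p : Prim A) (k : p.rep) : Tm' Cast Inert Γ A
  | var {Γ A} (x : GVar Γ A) : Tm' Cast Inert Γ A
  | lam {Γ B} (A : GType) (N : Tm' Cast Inert (A :: Γ) B) : Tm' Cast Inert Γ (.arr A B)
  | app {Γ A B} (L : Tm' Cast Inert Γ (.arr A B)) (M : Tm' Cast Inert Γ A) : Tm' Cast Inert Γ B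
  | ite {Γ A} (L : Tm' Cast Inert Γ (.base .bool)) (M N : Tm' Cast Inert Γ A) :
      Tm' Cast Inert Γ A
  | cons {Γ A B} (M : Tm' Cast Inert Γ A) (N : Tm' Cast Inert Γ B) : Tm' Cast Inert Γ (.prod A B)
  | fst {Γ A B} (M : Tm' Cast Inert Γ (.prod A B)) : Tm' Cast Inert Γ A
  | snd {Γ A B} (M : Tm' Cast Inert Γ (.prod A B)) : Tm' Cast Inert Γ B
  | inl {Γ A} (B : GType) (M : Tm' Cast Inert Γ A) : Tm' Cast Inert Γ (.sum A B)
  | inr {Γ B} (A : GType) (M : Tm' Cast Inert Γ B) : Tm' Cast Inert Γ (.sum A B)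
  | case {Γ A B C} (L : Tm' Cast Inert Γ (.sum A B))
      (M : Tm' Cast Inert (A :: Γ) C) (N : Tm' Cast Inert (B :: Γ) C) : Tm' Cast Inert Γ C
  | cast {Γ A B} (M : Tm' Cast Inert Γ A) (c : Cast A B) : Tm' Cast Inert Γ B
  | wrap {Γ A B} (M : Tm' Cast Inert Γ A) (c : Cast A B) (i : Inert A B c) : Tm' Cast Inert Γ B
  | blame {Γ} (A : GType) (ℓ : Label) : Tm' Cast Inert Γ A

def Tm'.rename {Cast Inert} :
    ∀ {Γ Δ : List GType} {A : GType}, Ren Γ Δ → Tm' Cast Inert Γ A → Tm' Cast Inert Δ A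
  | _, _, _, _, .const p k => .const p k
  | _, _, _, ρ, .var x => .var (ρ _ x)
  | _, _, _, ρ, .lam A N => .lam A (N.rename (ρ.ext _))
  | _, _, _, ρ, .app L M => .app (L.rename ρ) (M.rename ρ)
  | _, _, _, ρ, .ite L M N => .ite (L.rename ρ) (M.rename ρ) (N.rename ρ)
  | _, _, _, ρ, .cons M N => .cons (M.rename ρ) (N.rename ρ)
  | _, _, _, ρ, .fst M => .fst (M.rename ρ)
  | _, _, _, ρ, .snd M => .snd (M.rename ρ)
  | _, _, _, ρ, .inl B M => .inl B (M.rename ρ)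
  | _, _, _, ρ, .inr A M => .inr A (M.rename ρ)
  | _, _, _, ρ, .case L M N => .case (L.rename ρ) (M.rename (ρ.ext _)) (N.rename (ρ.ext _))
  | _, _, _, ρ, .cast M c => .cast (M.rename ρ) c
  | _, _, _, ρ, .wrap M c i => .wrap (M.rename ρ) c i
  | _, _, _, _, .blame A ℓ => .blame A ℓ

def Subst' (Cast : GType → GType → Type) (Inert : ∀ A B : GType, Cast A B → Prop)
    (Γ Δ : List GType) : Type :=
  ∀ A : GType, GVar Γ A → Tm' Cast Inert Δ A

def Subst'.exts {Cast Inert} {Γ Δ : List GType} (σ : Subst' Cast Inert Γ Δ) (B : GType) :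
    Subst' Cast Inert (B :: Γ) (B :: Δ) :=
  fun _ x =>
    match x with
    | .z => .var .z
    | .s y => (σ _ y).rename (shiftRen B)

def Tm'.subst {Cast Inert} :
    ∀ {Γ Δ : List GType} {A : GType}, Subst' Cast Inert Γ Δ → Tm' Cast Inert Γ A →
      Tm' Cast Inert Δ A
  | _, _, _, _, .const p k => .const p k
  | _, _, _, σ, .var x => σ _ x
  | _, _, _, σ, .lam A N => .lam A (N.subst (σ.exts _))
  | _, _, _, σ, .app L M => .app (L.subst σ) (M.subst σ)
  | _, _, _, σ, .ite L M N => .ite (L.subst σ) (M.subst σ) (N.subst σ)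
  | _, _, _, σ, .cons M N => .cons (M.subst σ) (N.subst σ)
  | _, _, _, σ, .fst M => .fst (M.subst σ)
  | _, _, _, σ, .snd M => .snd (M.subst σ)
  | _, _, _, σ, .inl B M => .inl B (M.subst σ)
  | _, _, _, σ, .inr A M => .inr A (M.subst σ)
  | _, _, _, σ, .case L M N => .case (L.subst σ) (M.subst (σ.exts _)) (N.subst (σ.exts _))
  | _, _, _, σ, .cast M c => .cast (M.subst σ) c
  | _, _, _, σ, .wrap M c i => .wrap (M.subst σ) c i
  | _, _, _, _, .blame A ℓ => .blame A ℓ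

def substZero' {Cast Inert} {Γ : List GType} {B : GType} (N : Tm' Cast Inert Γ B) :
    Subst' Cast Inert (B :: Γ) Γ :=
  fun _ x =>
    match x with
    | .z => N
    | .s y => .var y

def Tm'.subst1 {Cast Inert} {Γ : List GType} {A B : GType}
    (M : Tm' Cast Inert (B :: Γ) A) (N : Tm' Cast Inert Γ B) : Tm' Cast Inert Γ A :=
  M.subst (substZero' N)

/-- Evaluation frames for `CC′(⇒)`. -/
inductive Frame' (Cast : GType → GType → Type) (Inert : ∀ A B : GType, Cast A B → Prop)
    (Val : ∀ {Γ : List GType} {A : GType}, Tm' Cast Inert Γ A → Prop)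
    (Γ : List GType) : GType → GType → Type
  | appL {A B} (M : Tm' Cast Inert Γ A) : Frame' Cast Inert Val Γ (.arr A B) B
  | appR {A B} (L : Tm' Cast Inert Γ (.arr A B)) (h : Val L) : Frame' Cast Inert Val Γ A B
  | ite {A} (M N : Tm' Cast Inert Γ A) : Frame' Cast Inert Val Γ (.base .bool) A
  | consR {A B} (M : Tm' Cast Inert Γ A) (h : Val M) : Frame' Cast Inert Val Γ B (.prod A B)
  | consL {A B} (N : Tm' Cast Inert Γ B) : Frame' Cast Inert Val Γ A (.prod A B)
  | fst {A B} : Frame' Cast Inert Val Γ (.prod A B) A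
  | snd {A B} : Frame' Cast Inert Val Γ (.prod A B) B
  | inl {A} (B : GType) : Frame' Cast Inert Val Γ A (.sum A B)
  | inr {B} (A : GType) : Frame' Cast Inert Val Γ B (.sum A B)
  | case {A B C} (M : Tm' Cast Inert (A :: Γ) C) (N : Tm' Cast Inert (B :: Γ) C) :
      Frame' Cast Inert Val Γ (.sum A B) C
  | cast {A B} (c : Cast A B) : Frame' Cast Inert Val Γ A B

def plug' {Cast Inert Val} {Γ : List GType} {A B : GType} :
    Tm' Cast Inert Γ A → Frame' Cast Inert Val Γ A B → Tm' Cast Inert Γ B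
  | M, .appL N => .app M N
  | M, .appR L _ => .app L M
  | M, .ite M₁ N₁ => .ite M M₁ N₁
  | M, .consR M₁ _ => .cons M₁ M
  | M, .consL N => .cons M N
  | M, .fst => .fst M
  | M, .snd => .snd M
  | M, .inl B => .inl B M
  | M, .inr A => .inr A M
  | M, .case M₁ N₁ => .case M M₁ N₁
  | M, .cast c => .cast M c

abbrev LBInert' (v : LBVariant) : ∀ A B : GType, LBCast A B → Prop :=
  fun _ _ c => LBInert v c

/-- Terms of the λB′ calculus (per variant): `CC′(⇒)` instantiated with λB casts. -/
abbrev LBTm (v : LBVariant) : List GType → GType → Type := Tm' LBCast (LBInert' v)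

/-- Values of λB′. -/
inductive LBValue (v : LBVariant) : ∀ {Γ : List GType} {A : GType}, LBTm v Γ A → Prop
  | lam {Γ A B} {N : LBTm v (A :: Γ) B} : LBValue v (.lam A N)
  | const {Γ A} {p : Prim A} {k : p.rep} : LBValue v (.const (Γ := Γ) p k)
  | pair {Γ A B} {M : LBTm v Γ A} {N : LBTm v Γ B} :
      LBValue v M → LBValue v N → LBValue v (.cons M N)
  | inl {Γ A B} {M : LBTm v Γ A} : LBValue v M → LBValue v (.inl (Γ := Γ) B M)
  | inr {Γ A B} {M : LBTm v Γ B} : LBValue v M → LBValue v (.inr (Γ := Γ) A M)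
  | wrap {Γ A B} {M : LBTm v Γ A} {c : LBCast A B} {i : LBInert v c} :
      LBValue v M → LBValue v (.wrap M c i)

/-- Cast insertion (compilation) from the GTLC into λB′. -/
def compile (v : LBVariant) : ∀ {Γ : List GType} {A : GType}, GTerm Γ A → LBTm v Γ A
  | _, _, .const p k => .const p k
  | _, _, .var x => .var x
  | _, _, .lam A N => .lam A (compile v N)
  | _, _, .app L M ℓ m cn =>
      .app (.cast (compile v L) (.mk _ _ ℓ m.consis))
           (.cast (compile v M) (.mk _ _ ℓ cn.symm))
  | _, _, .ite L M N ℓ cb cn =>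
      .ite (.cast (compile v L) (.mk _ _ ℓ cb))
           (.cast (compile v M) (.mk _ _ ℓ cn.joinL))
           (.cast (compile v N) (.mk _ _ ℓ cn.joinR))
  | _, _, .cons M N => .cons (compile v M) (compile v N)
  | _, _, .fst M ℓ m => .fst (.cast (compile v M) (.mk _ _ ℓ m.consis))
  | _, _, .snd M ℓ m => .snd (.cast (compile v M) (.mk _ _ ℓ m.consis))
  | _, _, .inl B M => .inl B (compile v M)
  | _, _, .inr A M => .inr A (compile v M)
  | _, _, .case L M N ℓ ca bc =>
      .case (.cast (compile v L) (.mk _ _ ℓ ca))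
            (.cast (compile v M) (.mk _ _ ℓ bc.joinL))
            (.cast (compile v N) (.mk _ _ ℓ bc.joinR))

/-- Precision on λB inert casts: same-ground injections are related, and cross
casts of the same shape are related when their source types and their target
types are pointwise related by precision. -/
inductive CPrecII : ∀ {A B A' B' : GType}, LBCast A B → LBCast A' B' → Prop
  | inj {G : GType} {ℓ ℓ' h h'} : Ground G →
      CPrecII (.mk G .unk ℓ h) (.mk G .unk ℓ' h')
  | arr {A B C D A' B' C' D' : GType} {ℓ ℓ' h h'} :
      TyPrec (.arr A B) (.arr A' B') → TyPrec (.arr C D) (.arr C' D') →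
      CPrecII (.mk (.arr A B) (.arr C D) ℓ h) (.mk (.arr A' B') (.arr C' D') ℓ' h')
  | prod {A B C D A' B' C' D' : GType} {ℓ ℓ' h h'} :
      TyPrec (.prod A B) (.prod A' B') → TyPrec (.prod C D) (.prod C' D') →
      CPrecII (.mk (.prod A B) (.prod C D) ℓ h) (.mk (.prod A' B') (.prod C' D') ℓ' h')
  | sum {A B C D A' B' C' D' : GType} {ℓ ℓ' h h'} :
      TyPrec (.sum A B) (.sum A' B') → TyPrec (.sum C D) (.sum C' D') →
      CPrecII (.mk (.sum A B) (.sum C D) ℓ h) (.mk (.sum A' B') (.sum C' D') ℓ' h')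

/-- Precision between an inert λB cast and a type. -/
inductive CPrecIT : ∀ {A B : GType}, LBCast A B → GType → Prop
  | inj {G A' : GType} {ℓ h} : Ground G → TyPrec G A' → CPrecIT (.mk G .unk ℓ h) A'
  | arr {A B C D A' B' : GType} {ℓ h} :
      TyPrec (.arr A B) (.arr A' B') → TyPrec (.arr C D) (.arr A' B') →
      CPrecIT (.mk (.arr A B) (.arr C D) ℓ h) (.arr A' B')
  | prod {A B C D A' B' : GType} {ℓ h} :
      TyPrec (.prod A B) (.prod A' B') → TyPrec (.prod C D) (.prod A' B') →
      CPrecIT (.mk (.prod A B) (.prod C D) ℓ h) (.prod A' B')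
  | sum {A B C D A' B' : GType} {ℓ h} :
      TyPrec (.sum A B) (.sum A' B') → TyPrec (.sum C D) (.sum A' B') →
      CPrecIT (.mk (.sum A B) (.sum C D) ℓ h) (.sum A' B')

/-- Precision between a type and an inert λB cast. -/
inductive CPrecTI : GType → ∀ {A' B' : GType}, LBCast A' B' → Prop
  | arr {A B A' B' C' D' : GType} {ℓ h} :
      TyPrec (.arr A B) (.arr A' B') → TyPrec (.arr A B) (.arr C' D') →
      CPrecTI (.arr A B) (.mk (.arr A' B') (.arr C' D') ℓ h)
  | prod {A B A' B' C' D' : GType} {ℓ h} :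
      TyPrec (.prod A B) (.prod A' B') → TyPrec (.prod A B) (.prod C' D') →
      CPrecTI (.prod A B) (.mk (.prod A' B') (.prod C' D') ℓ h)
  | sum {A B A' B' C' D' : GType} {ℓ h} :
      TyPrec (.sum A B) (.sum A' B') → TyPrec (.sum A B) (.sum C' D') →
      CPrecTI (.sum A B) (.mk (.sum A' B') (.sum C' D') ℓ h)

/-- Term precision for λB′ terms. -/
inductive TPrec (v : LBVariant) :
    ∀ {Γ Γ' : List GType} {A A' : GType}, LBTm v Γ A → LBTm v Γ' A' → Prop
  | const {Γ Γ' : List GType} {A : GType} (p : Prim A) (k : p.rep) :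
      TPrec v (Γ := Γ) (Γ' := Γ') (.const p k) (.const p k)
  | var {Γ Γ' A A'} (x : GVar Γ A) (x' : GVar Γ' A') :
      x.idx = x'.idx → TPrec v (.var x) (.var x')
  | lam {Γ Γ' A A' B B'} {N : LBTm v (A :: Γ) B} {N' : LBTm v (A' :: Γ') B'} :
      TyPrec A A' → TPrec v N N' → TPrec v (.lam A N) (.lam A' N')
  | app {Γ Γ' A A' B B'} {L : LBTm v Γ (.arr A B)} {L' : LBTm v Γ' (.arr A' B')}
      {M : LBTm v Γ A} {M' : LBTm v Γ' A'} :
      TPrec v L L' → TPrec v M M' → TPrec v (.app L M) (.app L' M')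
  | ite {Γ Γ' A A'} {L : LBTm v Γ (.base .bool)} {L' : LBTm v Γ' (.base .bool)}
      {M N : LBTm v Γ A} {M' N' : LBTm v Γ' A'} :
      TPrec v L L' → TPrec v M M' → TPrec v N N' → TPrec v (.ite L M N) (.ite L' M' N')
  | cons {Γ Γ' A A' B B'} {M : LBTm v Γ A} {M' : LBTm v Γ' A'}
      {N : LBTm v Γ B} {N' : LBTm v Γ' B'} :
      TPrec v M M' → TPrec v N N' → TPrec v (.cons M N) (.cons M' N')
  | fst {Γ Γ' A A' B B'} {M : LBTm v Γ (.prod A B)} {M' : LBTm v Γ' (.prod A' B')} :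
      TPrec v M M' → TPrec v (.fst M) (.fst M')
  | snd {Γ Γ' A A' B B'} {M : LBTm v Γ (.prod A B)} {M' : LBTm v Γ' (.prod A' B')} :
      TPrec v M M' → TPrec v (.snd M) (.snd M')
  | inl {Γ Γ' A A' B B'} {M : LBTm v Γ A} {M' : LBTm v Γ' A'} :
      TyPrec B B' → TPrec v M M' → TPrec v (.inl (Γ := Γ) B M) (.inl (Γ := Γ') B' M')
  | inr {Γ Γ' A A' B B'} {M : LBTm v Γ B} {M' : LBTm v Γ' B'} :
      TyPrec A A' → TPrec v M M' → TPrec v (.inr (Γ := Γ) A M) (.inr (Γ := Γ') A' M')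
  | case {Γ Γ' A₁ A₂ A₁' A₂' C C'} {L : LBTm v Γ (.sum A₁ A₂)} {L' : LBTm v Γ' (.sum A₁' A₂')}
      {M : LBTm v (A₁ :: Γ) C} {M' : LBTm v (A₁' :: Γ') C'}
      {N : LBTm v (A₂ :: Γ) C} {N' : LBTm v (A₂' :: Γ') C'} :
      TyPrec A₁ A₁' → TyPrec A₂ A₂' → TPrec v L L' → TPrec v M M' → TPrec v N N' →
      TPrec v (.case L M N) (.case L' M' N')
  | cast {Γ Γ' A B A' B'} {M : LBTm v Γ A} {M' : LBTm v Γ' A'}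
      {c : LBCast A B} {c' : LBCast A' B'} :
      TyPrec A A' → TyPrec B B' → TPrec v M M' → TPrec v (.cast M c) (.cast M' c')
  | castL {Γ Γ' A B A'} {M : LBTm v Γ A} {M' : LBTm v Γ' A'} {c : LBCast A B} :
      TyPrec A A' → TyPrec B A' → TPrec v M M' → TPrec v (.cast M c) M'
  | castR {Γ Γ' A A' B'} {M : LBTm v Γ A} {M' : LBTm v Γ' A'} {c' : LBCast A' B'} :
      TyPrec A A' → TyPrec A B' → TPrec v M M' → TPrec v M (.cast M' c')
  | wrap {Γ Γ' A B A' B'} {M : LBTm v Γ A} {M' : LBTm v Γ' A'}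
      {c : LBCast A B} {c' : LBCast A' B'} {i : LBInert v c} {i' : LBInert v c'} :
      CPrecII c c' → TPrec v M M' → (B = .unk → B' = .unk) →
      TPrec v (.wrap M c i) (.wrap M' c' i')
  | wrapL {Γ Γ' A B A'} {M : LBTm v Γ A} {M' : LBTm v Γ' A'}
      {c : LBCast A B} {i : LBInert v c} :
      CPrecIT c A' → TPrec v M M' → TPrec v (.wrap M c i) M'
  | wrapR {Γ Γ' A A' B'} {M : LBTm v Γ A} {M' : LBTm v Γ' A'}
      {c' : LBCast A' B'} {i' : LBInert v c'} :
      CPrecTI A c' → TPrec v M M' → A ≠ .unk → TPrec v M (.wrap M' c' i')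
  | blame {Γ Γ' A A'} {M : LBTm v Γ A} {ℓ : Label} :
      TyPrec A A' → TPrec v M (.blame (Γ := Γ') A' ℓ)

/-- The ground type of a (non-`?`) type. -/
def gnd : GType → GType
  | .base b => .base b
  | .unk => .unk
  | .arr _ _ => .arr .unk .unk
  | .prod _ _ => .prod .unk .unk
  | .sum _ _ => .sum .unk .unk

def consisGnd : (A : GType) → Consis A (gnd A)
  | .base b => .base b
  | .unk => .unkR .unk
  | .arr A B => .arr (.unkL A) (.unkR B)
  | .prod A B => .prod (.unkR A) (.unkR B)
  | .sum A B => .sum (.unkR A) (.unkR B)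

def consisGndR (A : GType) : Consis (gnd A) A := (consisGnd A).symm

/-- Reduction for λB′ (both variants). -/
inductive LBRed : (v : LBVariant) →
    ∀ {Γ : List GType} {A : GType}, LBTm v Γ A → LBTm v Γ A → Prop
  -- congruence rules
  | xi {v Γ A B} {M M' : LBTm v Γ A} (F : Frame' LBCast (LBInert' v) (@LBValue v) Γ A B) :
      LBRed v M M' → LBRed v (plug' M F) (plug' M' F)
  | xiBlame {v Γ A B} (F : Frame' LBCast (LBInert' v) (@LBValue v) Γ A B) (ℓ : Label) :
      LBRed v (plug' (.blame A ℓ) F) (.blame B ℓ)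
  -- an applied inert cast becomes a wrap
  | wrap {v Γ A B} {V : LBTm v Γ A} {c : LBCast A B} (i : LBInert v c) :
      LBValue v V → LBRed v (.cast V c) (.wrap V c i)
  -- applyCast for the active casts
  | castId {v Γ a ℓ} (h : Consis a a) {V : LBTm v Γ a} :
      LBValue v V → Atomic a → LBRed v (.cast V (.mk a a ℓ h)) V
  | castInj {v Γ A ℓ} (h : Consis A .unk) {V : LBTm v Γ A} :
      LBValue v V → A ≠ .unk → ¬ Ground A →
      LBRed v (.cast V (.mk A .unk ℓ h))
        (.cast (.cast V (.mk A (gnd A) ℓ (consisGnd A))) (.mk (gnd A) .unk ℓ (.unkR _)))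
  | castProjEq {v Γ G ℓ₁ ℓ₂} (h₁ : Consis G .unk) (h₂ : Consis .unk G)
      {V : LBTm v Γ G} (i : LBInert v (.mk G .unk ℓ₁ h₁)) :
      LBValue v V → Ground G →
      LBRed v (.cast (.wrap V (.mk G .unk ℓ₁ h₁) i) (.mk .unk G ℓ₂ h₂)) V
  | castProjNeq {v Γ G B ℓ₁ ℓ₂} (h₁ : Consis G .unk) (h₂ : Consis .unk B)
      {V : LBTm v Γ G} (i : LBInert v (.mk G .unk ℓ₁ h₁)) :
      LBValue v V → Ground G → Ground B → B ≠ G →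
      LBRed v (.cast (.wrap V (.mk G .unk ℓ₁ h₁) i) (.mk .unk B ℓ₂ h₂)) (.blame B ℓ₂)
  | castProjGnd {v Γ G B ℓ₁ ℓ₂} (h₁ : Consis G .unk) (h₂ : Consis .unk B)
      {V : LBTm v Γ G} (i : LBInert v (.mk G .unk ℓ₁ h₁)) :
      LBValue v V → Ground G → B ≠ .unk → ¬ Ground B →
      LBRed v (.cast (.wrap V (.mk G .unk ℓ₁ h₁) i) (.mk .unk B ℓ₂ h₂))
        (.cast (.cast (.wrap V (.mk G .unk ℓ₁ h₁) i) (.mk .unk (gnd B) ℓ₂ (.unkL _)))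
               (.mk (gnd B) B ℓ₂ (consisGndR B)))
  -- Variant 2: pair and sum cross casts are active (eta expansion)
  | castPairV2 {Γ A B C D ℓ} (h : Consis (.prod A B) (.prod C D))
      {V : LBTm .v2 Γ (.prod A B)} : LBValue .v2 V →
      LBRed .v2 (.cast V (.mk _ _ ℓ h))
        (.cons (.cast (.fst V) (.mk A C ℓ h.fstP)) (.cast (.snd V) (.mk B D ℓ h.sndP)))
  | castSumV2 {Γ A B C D ℓ} (h : Consis (.sum A B) (.sum C D))
      {V : LBTm .v2 Γ (.sum A B)} : LBValue .v2 V →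
      LBRed .v2 (.cast V (.mk _ _ ℓ h))
        (.case V (.inl D (.cast (.var .z) (.mk A C ℓ h.inlS)))
                 (.inr C (.cast (.var .z) (.mk B D ℓ h.inrS))))
  -- elimination of values wrapped in inert cross casts
  | funCast {v Γ A B C D ℓ} (h : Consis (.arr A B) (.arr C D))
      {V : LBTm v Γ (.arr A B)} {W : LBTm v Γ C} (i : LBInert v (.mk _ _ ℓ h)) :
      LBValue v V → LBValue v W →
      LBRed v (.app (.wrap V (.mk _ _ ℓ h) i) W)
              (.cast (.app V (.cast W (.mk C A ℓ h.domArr))) (.mk B D ℓ h.codArr))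
  | fstCast {v Γ A B C D ℓ} (h : Consis (.prod A B) (.prod C D))
      {V : LBTm v Γ (.prod A B)} (i : LBInert v (.mk _ _ ℓ h)) : LBValue v V →
      LBRed v (.fst (.wrap V (.mk _ _ ℓ h) i)) (.cast (.fst V) (.mk A C ℓ h.fstP))
  | sndCast {v Γ A B C D ℓ} (h : Consis (.prod A B) (.prod C D))
      {V : LBTm v Γ (.prod A B)} (i : LBInert v (.mk _ _ ℓ h)) : LBValue v V →
      LBRed v (.snd (.wrap V (.mk _ _ ℓ h) i)) (.cast (.snd V) (.mk B D ℓ h.sndP))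
  | caseCast {v Γ A B C D E ℓ} (h : Consis (.sum A B) (.sum C D))
      {V : LBTm v Γ (.sum A B)} {M : LBTm v (C :: Γ) E} {N : LBTm v (D :: Γ) E}
      (i : LBInert v (.mk _ _ ℓ h)) : LBValue v V →
      LBRed v (.case (.wrap V (.mk _ _ ℓ h) i) M N)
        (.case V
          ((M.rename ((shiftRen (Γ := Γ) A).ext C)).subst1 (.cast (.var .z) (.mk A C ℓ h.inlS)))
          ((N.rename ((shiftRen (Γ := Γ) B).ext D)).subst1 (.cast (.var .z) (.mk B D ℓ h.inrS))))
  -- the usual STLC rules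
  | beta {v Γ A B} {M : LBTm v (A :: Γ) B} {V : LBTm v Γ A} :
      LBValue v V → LBRed v (.app (.lam A M) V) (M.subst1 V)
  | delta {v} {Γ : List GType} {b A} (p : Prim A) (f : Prim.rep (.fn b p))
      (k : Prim.rep (.base b)) :
      LBRed v (Γ := Γ) (.app (.const (.fn b p) f) (.const (.base b) k)) (.const p (f k))
  | ifTrue {v Γ A} {M N : LBTm v Γ A} :
      LBRed v (.ite (.const (.base .bool) true) M N) M
  | ifFalse {v Γ A} {M N : LBTm v Γ A} :
      LBRed v (.ite (.const (.base .bool) false) M N) N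
  | betaFst {v Γ A B} {V : LBTm v Γ A} {W : LBTm v Γ B} :
      LBValue v V → LBValue v W → LBRed v (.fst (.cons V W)) V
  | betaSnd {v Γ A B} {V : LBTm v Γ A} {W : LBTm v Γ B} :
      LBValue v V → LBValue v W → LBRed v (.snd (.cons V W)) W
  | caseL {v Γ A B C} {V : LBTm v Γ A} {M : LBTm v (A :: Γ) C} {N : LBTm v (B :: Γ) C} :
      LBValue v V → LBRed v (.case (.inl B V) M N) (M.subst1 V)
  | caseR {v Γ A B C} {V : LBTm v Γ B} {M : LBTm v (A :: Γ) C} {N : LBTm v (B :: Γ) C} :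
      LBValue v V → LBRed v (.case (.inr A V) M N) (N.subst1 V)

/-- Multi-step reduction in λB′. -/
abbrev LBReds (v : LBVariant) {Γ : List GType} {A : GType} :
    LBTm v Γ A → LBTm v Γ A → Prop :=
  Relation.ReflTransGen (LBRed v)

/-- Divergence: an infinite reduction sequence. -/
def LBDiverges (v : LBVariant) {Γ : List GType} {A : GType} (M : LBTm v Γ A) : Prop :=
  ∃ f : ℕ → LBTm v Γ A, f 0 = M ∧ ∀ n, LBRed v (f n) (f (n + 1))

/-! ### Type precision -/

theorem TyPrec.rfl' : ∀ A : GType, TyPrec A A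
  | .base b => .base b
  | .unk => .unk _
  | .arr A B => .arr (TyPrec.rfl' A) (TyPrec.rfl' B)
  | .prod A B => .prod (TyPrec.rfl' A) (TyPrec.rfl' B)
  | .sum A B => .sum (TyPrec.rfl' A) (TyPrec.rfl' B)

theorem TyPrec.trans' {A B C : GType} (h : TyPrec A B) (h' : TyPrec B C) : TyPrec A C := by
  induction h generalizing C with
  | unk A => exact .unk _
  | base b => exact h'
  | arr _ _ ih₁ ih₂ => cases h' with | arr p q => exact .arr (ih₁ p) (ih₂ q)
  | prod _ _ ih₁ ih₂ => cases h' with | prod p q => exact .prod (ih₁ p) (ih₂ q)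
  | sum _ _ ih₁ ih₂ => cases h' with | sum p q => exact .sum (ih₁ p) (ih₂ q)

theorem CtxPrec.rfl' : ∀ Γ : List GType, CtxPrec Γ Γ
  | [] => .nil
  | A :: Γ => .cons (TyPrec.rfl' A) (CtxPrec.rfl' Γ)

theorem Consis.le_join {A B : GType} (c : Consis A B) : TyPrec A c.join ∧ TyPrec B c.join := by
  induction c with
  | unkR A => exact ⟨.rfl' _, .unk _⟩
  | unkL A => exact ⟨.unk _, .rfl' _⟩
  | base b => exact ⟨.base _, .base _⟩
  | arr _ _ ih₁ ih₂ => exact ⟨.arr ih₁.2 ih₂.1, .arr ih₁.1 ih₂.2⟩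
  | prod _ _ ih₁ ih₂ => exact ⟨.prod ih₁.1 ih₂.1, .prod ih₁.2 ih₂.2⟩
  | sum _ _ ih₁ ih₂ => exact ⟨.sum ih₁.1 ih₂.1, .sum ih₁.2 ih₂.2⟩

theorem Consis.join_lub {A B C : GType} (c : Consis A B) (hA : TyPrec A C) (hB : TyPrec B C) :
    TyPrec c.join C := by
  induction c generalizing C with
  | unkR A => exact hA
  | unkL A => exact hB
  | base b => exact hA
  | arr _ _ ih₁ ih₂ =>
    cases hA with | arr p q => cases hB with | arr r s => exact .arr (ih₁ r p) (ih₂ q s)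
  | prod _ _ ih₁ ih₂ =>
    cases hA with | prod p q => cases hB with | prod r s => exact .prod (ih₁ p r) (ih₂ q s)
  | sum _ _ ih₁ ih₂ =>
    cases hA with | sum p q => cases hB with | sum r s => exact .sum (ih₁ p r) (ih₂ q s)

theorem Consis.join_mono {A B A' B' : GType} (c : Consis A B) (c' : Consis A' B')
    (hA : TyPrec A A') (hB : TyPrec B B') : TyPrec c.join c'.join :=
  c.join_lub (hA.trans' c'.le_join.1) (hB.trans' c'.le_join.2)

theorem MatchArr.mono {A A₁ A₂ A' A₁' A₂' : GType} (m : MatchArr A A₁ A₂)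
    (m' : MatchArr A' A₁' A₂') (h : TyPrec A A') : TyPrec A₁ A₁' ∧ TyPrec A₂ A₂' := by
  cases m with
  | unk => exact ⟨.unk _, .unk _⟩
  | arr => cases h with | arr p q => cases m'; exact ⟨p, q⟩

theorem MatchProd.mono {A A₁ A₂ A' A₁' A₂' : GType} (m : MatchProd A A₁ A₂)
    (m' : MatchProd A' A₁' A₂') (h : TyPrec A A') : TyPrec A₁ A₁' ∧ TyPrec A₂ A₂' := by
  cases m with
  | unk => exact ⟨.unk _, .unk _⟩
  | prod => cases h with | prod p q => cases m'; exact ⟨p, q⟩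

theorem GVar.prec {Γ Γ' : List GType} {A A' : GType} (x : GVar Γ A) (x' : GVar Γ' A')
    (h : CtxPrec Γ Γ') (e : x.idx = x'.idx) : TyPrec A A' := by
  induction x generalizing Γ' A' with
  | z =>
    cases h with
    | cons p _ =>
      cases x' with
      | z => exact p
      | s y => simp [GVar.idx] at e
  | s x ih =>
    cases h with
    | cons _ q =>
      cases x' with
      | z => simp [GVar.idx] at e
      | s y => exact ih y q (by simpa [GVar.idx] using e)

theorem gnd_ground {A : GType} (h : A ≠ .unk) : Ground (gnd A) := by
  cases A <;> first | exact absurd rfl h | constructor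

theorem gnd_prec : ∀ A : GType, TyPrec (gnd A) A
  | .base b => .base b
  | .unk => .unk _
  | .arr _ _ => .arr (.unk _) (.unk _)
  | .prod _ _ => .prod (.unk _) (.unk _)
  | .sum _ _ => .sum (.unk _) (.unk _)

theorem gnd_eq {A B : GType} (h : TyPrec A B) (hA : A ≠ .unk) : gnd A = gnd B := by
  cases h <;> first | exact absurd rfl hA | rfl

theorem Ground.gnd_self {G : GType} (h : Ground G) : gnd G = G := by
  cases h <;> rfl

theorem Ground.ne_unk {G : GType} (h : Ground G) : G ≠ .unk := by
  cases h <;> simp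

theorem TyPrec.to_unk {A : GType} (h : TyPrec A .unk) : A = .unk := by
  cases h; rfl

/-! ### The simulation relation -/

/-- The relation carried through the simulation. It is term precision `TPrec` with two extra
requirements: wrapped terms are values (reduction does not enter a wrap, so a wrap around a
redex would be stuck), and related variables have related types. -/
inductive SimRel (v : LBVariant) :
    ∀ {Γ Γ' : List GType} {A A' : GType}, LBTm v Γ A → LBTm v Γ' A' → Prop
  | const {Γ Γ' : List GType} {A : GType} (p : Prim A) (k : p.rep) :
      SimRel v (Γ := Γ) (Γ' := Γ') (.const p k) (.const p k)
  | var {Γ Γ' A A'} (x : GVar Γ A) (x' : GVar Γ' A') :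
      x.idx = x'.idx → TyPrec A A' → SimRel v (.var x) (.var x')
  | lam {Γ Γ' A A' B B'} {N : LBTm v (A :: Γ) B} {N' : LBTm v (A' :: Γ') B'} :
      TyPrec A A' → SimRel v N N' → SimRel v (.lam A N) (.lam A' N')
  | app {Γ Γ' A A' B B'} {L : LBTm v Γ (.arr A B)} {L' : LBTm v Γ' (.arr A' B')}
      {M : LBTm v Γ A} {M' : LBTm v Γ' A'} :
      SimRel v L L' → SimRel v M M' → SimRel v (.app L M) (.app L' M')
  | ite {Γ Γ' A A'} {L : LBTm v Γ (.base .bool)} {L' : LBTm v Γ' (.base .bool)}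
      {M N : LBTm v Γ A} {M' N' : LBTm v Γ' A'} :
      SimRel v L L' → SimRel v M M' → SimRel v N N' → SimRel v (.ite L M N) (.ite L' M' N')
  | cons {Γ Γ' A A' B B'} {M : LBTm v Γ A} {M' : LBTm v Γ' A'}
      {N : LBTm v Γ B} {N' : LBTm v Γ' B'} :
      SimRel v M M' → SimRel v N N' → SimRel v (.cons M N) (.cons M' N')
  | fst {Γ Γ' A A' B B'} {M : LBTm v Γ (.prod A B)} {M' : LBTm v Γ' (.prod A' B')} :
      SimRel v M M' → SimRel v (.fst M) (.fst M')
  | snd {Γ Γ' A A' B B'} {M : LBTm v Γ (.prod A B)} {M' : LBTm v Γ' (.prod A' B')} :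
      SimRel v M M' → SimRel v (.snd M) (.snd M')
  | inl {Γ Γ' A A' B B'} {M : LBTm v Γ A} {M' : LBTm v Γ' A'} :
      TyPrec B B' → SimRel v M M' → SimRel v (.inl (Γ := Γ) B M) (.inl (Γ := Γ') B' M')
  | inr {Γ Γ' A A' B B'} {M : LBTm v Γ B} {M' : LBTm v Γ' B'} :
      TyPrec A A' → SimRel v M M' → SimRel v (.inr (Γ := Γ) A M) (.inr (Γ := Γ') A' M')
  | case {Γ Γ' A₁ A₂ A₁' A₂' C C'} {L : LBTm v Γ (.sum A₁ A₂)} {L' : LBTm v Γ' (.sum A₁' A₂')}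
      {M : LBTm v (A₁ :: Γ) C} {M' : LBTm v (A₁' :: Γ') C'}
      {N : LBTm v (A₂ :: Γ) C} {N' : LBTm v (A₂' :: Γ') C'} :
      TyPrec A₁ A₁' → TyPrec A₂ A₂' → SimRel v L L' → SimRel v M M' → SimRel v N N' →
      SimRel v (.case L M N) (.case L' M' N')
  | cast {Γ Γ' A B A' B'} {M : LBTm v Γ A} {M' : LBTm v Γ' A'}
      {c : LBCast A B} {c' : LBCast A' B'} :
      TyPrec A A' → TyPrec B B' → SimRel v M M' → SimRel v (.cast M c) (.cast M' c')
  | castL {Γ Γ' A B A'} {M : LBTm v Γ A} {M' : LBTm v Γ' A'} {c : LBCast A B} :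
      TyPrec A A' → TyPrec B A' → SimRel v M M' → SimRel v (.cast M c) M'
  | castR {Γ Γ' A A' B'} {M : LBTm v Γ A} {M' : LBTm v Γ' A'} {c' : LBCast A' B'} :
      TyPrec A A' → TyPrec A B' → SimRel v M M' → SimRel v M (.cast M' c')
  | wrap {Γ Γ' A B A' B'} {M : LBTm v Γ A} {M' : LBTm v Γ' A'}
      {c : LBCast A B} {c' : LBCast A' B'} {i : LBInert v c} {i' : LBInert v c'} :
      LBValue v M → LBValue v M' →
      CPrecII c c' → SimRel v M M' → (B = .unk → B' = .unk) →
      SimRel v (.wrap M c i) (.wrap M' c' i')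
  | wrapL {Γ Γ' A B A'} {M : LBTm v Γ A} {M' : LBTm v Γ' A'}
      {c : LBCast A B} {i : LBInert v c} :
      LBValue v M → CPrecIT c A' → SimRel v M M' → SimRel v (.wrap M c i) M'
  | wrapR {Γ Γ' A A' B'} {M : LBTm v Γ A} {M' : LBTm v Γ' A'}
      {c' : LBCast A' B'} {i' : LBInert v c'} :
      LBValue v M' → CPrecTI A c' → SimRel v M M' → A ≠ .unk → SimRel v M (.wrap M' c' i')
  | blame {Γ Γ' A A'} {M : LBTm v Γ A} {ℓ : Label} :
      TyPrec A A' → SimRel v M (.blame (Γ := Γ') A' ℓ)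

section
variable {v : LBVariant} {Γ Γ' Δ Δ' : List GType} {A A' B B' : GType}

theorem SimRel.toTPrec {M : LBTm v Γ A} {N : LBTm v Γ' A'} (h : SimRel v M N) : TPrec v M N := by
  induction h with
  | const p k => exact .const p k
  | var x x' e _ => exact .var x x' e
  | lam p _ ih => exact .lam p ih
  | app _ _ ih₁ ih₂ => exact .app ih₁ ih₂
  | ite _ _ _ ih₁ ih₂ ih₃ => exact .ite ih₁ ih₂ ih₃
  | cons _ _ ih₁ ih₂ => exact .cons ih₁ ih₂
  | fst _ ih => exact .fst ih
  | snd _ ih => exact .snd ih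
  | inl p _ ih => exact .inl p ih
  | inr p _ ih => exact .inr p ih
  | case p q _ _ _ ih₁ ih₂ ih₃ => exact .case p q ih₁ ih₂ ih₃
  | cast p q _ ih => exact .cast p q ih
  | castL p q _ ih => exact .castL p q ih
  | castR p q _ ih => exact .castR p q ih
  | wrap _ _ c _ e ih => exact .wrap c ih e
  | wrapL _ c _ ih => exact .wrapL c ih
  | wrapR _ c _ e ih => exact .wrapR c ih e
  | blame p => exact .blame p

theorem SimRel.ty {M : LBTm v Γ A} {N : LBTm v Γ' A'} (h : SimRel v M N) : TyPrec A A' := by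
  induction h with
  | const p k => exact .rfl' _
  | var x x' _ p => exact p
  | lam p _ ih => exact .arr p ih
  | app _ _ ih₁ _ => cases ih₁; assumption
  | ite _ _ _ _ ih₂ _ => exact ih₂
  | cons _ _ ih₁ ih₂ => exact .prod ih₁ ih₂
  | fst _ ih => cases ih; assumption
  | snd _ ih => cases ih; assumption
  | inl p _ ih => exact .sum ih p
  | inr p _ ih => exact .sum p ih
  | case _ _ _ _ _ _ ih₂ _ => exact ih₂
  | cast _ q _ _ => exact q
  | castL _ q _ _ => exact q
  | castR _ q _ _ => exact q
  | wrap _ _ c _ _ _ => cases c <;> first | assumption | exact .unk _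
  | wrapL _ c _ _ => cases c <;> first | assumption | exact .unk _
  | wrapR _ c _ _ _ => cases c <;> assumption
  | blame p => exact p

/-! ### Renaming and substitution -/

theorem LBValue.rename {V : LBTm v Γ A} (h : LBValue v V) (ρ : Ren Γ Δ) :
    LBValue v (V.rename ρ) := by
  induction h with
  | lam => exact .lam
  | const => exact .const
  | pair _ _ ih₁ ih₂ => exact .pair ih₁ ih₂
  | inl _ ih => exact .inl ih
  | inr _ ih => exact .inr ih
  | wrap _ ih => exact .wrap ih

theorem LBValue.subst {V : LBTm v Γ A} (h : LBValue v V) (σ : Subst' LBCast (LBInert' v) Γ Δ) :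
    LBValue v (V.subst σ) := by
  induction h with
  | lam => exact .lam
  | const => exact .const
  | pair _ _ ih₁ ih₂ => exact .pair ih₁ ih₂
  | inl _ ih => exact .inl ih
  | inr _ ih => exact .inr ih
  | wrap _ ih => exact .wrap ih

/-- Two renamings are related when they act in the same way on de Bruijn indices. -/
def RenRel (ρ : Ren Γ Δ) (ρ' : Ren Γ' Δ') : Prop :=
  ∀ (A A' : GType) (x : GVar Γ A) (x' : GVar Γ' A'), x.idx = x'.idx →
    (ρ A x).idx = (ρ' A' x').idx

/-- Two substitutions are related when they send related variables to related terms. -/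
def SubRel (σ : Subst' LBCast (LBInert' v) Γ Δ) (σ' : Subst' LBCast (LBInert' v) Γ' Δ') : Prop :=
  ∀ (A A' : GType) (x : GVar Γ A) (x' : GVar Γ' A'), x.idx = x'.idx → TyPrec A A' →
    SimRel v (σ A x) (σ' A' x')

theorem RenRel.ext {ρ : Ren Γ Δ} {ρ' : Ren Γ' Δ'} (h : RenRel ρ ρ') :
    RenRel (ρ.ext B) (ρ'.ext B') := by
  intro A A' x x' e
  cases x <;> cases x' <;> simp only [GVar.idx, Ren.ext] at e ⊢ <;> try omega
  rw [h _ _ _ _ (Nat.succ.inj e)]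

theorem RenRel.shift : RenRel (shiftRen (Γ := Γ) B) (shiftRen (Γ := Γ') B') := by
  intro A A' x x' e
  simp [shiftRen, GVar.idx, e]

theorem SimRel.rename {M : LBTm v Γ A} {N : LBTm v Γ' A'} (h : SimRel v M N)
    {Δ Δ' : List GType} {ρ : Ren Γ Δ} {ρ' : Ren Γ' Δ'}
    (hρ : RenRel ρ ρ') : SimRel v (M.rename ρ) (N.rename ρ') := by
  induction h generalizing Δ Δ' with
  | const p k => exact .const p k
  | var x x' e p => exact .var _ _ (hρ _ _ _ _ e) p
  | lam p _ ih => exact .lam p (ih hρ.ext)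
  | app _ _ ih₁ ih₂ => exact .app (ih₁ hρ) (ih₂ hρ)
  | ite _ _ _ ih₁ ih₂ ih₃ => exact .ite (ih₁ hρ) (ih₂ hρ) (ih₃ hρ)
  | cons _ _ ih₁ ih₂ => exact .cons (ih₁ hρ) (ih₂ hρ)
  | fst _ ih => exact .fst (ih hρ)
  | snd _ ih => exact .snd (ih hρ)
  | inl p _ ih => exact .inl p (ih hρ)
  | inr p _ ih => exact .inr p (ih hρ)
  | case p q _ _ _ ih₁ ih₂ ih₃ => exact .case p q (ih₁ hρ) (ih₂ hρ.ext) (ih₃ hρ.ext)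
  | cast p q _ ih => exact .cast p q (ih hρ)
  | castL p q _ ih => exact .castL p q (ih hρ)
  | castR p q _ ih => exact .castR p q (ih hρ)
  | wrap a b c _ e ih => exact .wrap (a.rename _) (b.rename _) c (ih hρ) e
  | wrapL a c _ ih => exact .wrapL (a.rename _) c (ih hρ)
  | wrapR b c _ e ih => exact .wrapR (b.rename _) c (ih hρ) e
  | blame p => exact .blame p

theorem SubRel.exts {σ : Subst' LBCast (LBInert' v) Γ Δ} {σ' : Subst' LBCast (LBInert' v) Γ' Δ'}
    (h : SubRel σ σ') (hB : TyPrec B B') : SubRel (σ.exts B) (σ'.exts B') := by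
  intro A A' x x' e p
  cases x <;> cases x' <;> simp only [GVar.idx] at e <;> try omega
  · exact .var _ _ rfl hB
  · exact (h _ _ _ _ (Nat.succ.inj e) p).rename RenRel.shift

theorem SimRel.subst {M : LBTm v Γ A} {N : LBTm v Γ' A'} (h : SimRel v M N) {Δ Δ' : List GType}
    {σ : Subst' LBCast (LBInert' v) Γ Δ} {σ' : Subst' LBCast (LBInert' v) Γ' Δ'}
    (hσ : SubRel σ σ') : SimRel v (M.subst σ) (N.subst σ') := by
  induction h generalizing Δ Δ' with
  | const p k => exact .const p k
  | var x x' e p => exact hσ _ _ _ _ e p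
  | lam p _ ih => exact .lam p (ih (hσ.exts p))
  | app _ _ ih₁ ih₂ => exact .app (ih₁ hσ) (ih₂ hσ)
  | ite _ _ _ ih₁ ih₂ ih₃ => exact .ite (ih₁ hσ) (ih₂ hσ) (ih₃ hσ)
  | cons _ _ ih₁ ih₂ => exact .cons (ih₁ hσ) (ih₂ hσ)
  | fst _ ih => exact .fst (ih hσ)
  | snd _ ih => exact .snd (ih hσ)
  | inl p _ ih => exact .inl p (ih hσ)
  | inr p _ ih => exact .inr p (ih hσ)
  | case p q _ _ _ ih₁ ih₂ ih₃ => exact .case p q (ih₁ hσ) (ih₂ (hσ.exts p)) (ih₃ (hσ.exts q))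
  | cast p q _ ih => exact .cast p q (ih hσ)
  | castL p q _ ih => exact .castL p q (ih hσ)
  | castR p q _ ih => exact .castR p q (ih hσ)
  | wrap a b c _ e ih => exact .wrap (a.subst _) (b.subst _) c (ih hσ) e
  | wrapL a c _ ih => exact .wrapL (a.subst _) c (ih hσ)
  | wrapR b c _ e ih => exact .wrapR (b.subst _) c (ih hσ) e
  | blame p => exact .blame p

theorem SimRel.subst1 {M : LBTm v (B :: Γ) A} {M' : LBTm v (B' :: Γ') A'}
    {N : LBTm v Γ B} {N' : LBTm v Γ' B'} (h : SimRel v M M') (hN : SimRel v N N') :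
    SimRel v (M.subst1 N) (M'.subst1 N') := by
  refine h.subst ?_
  intro C C' x x' e p
  cases x <;> cases x' <;> simp only [GVar.idx] at e <;> try omega
  · exact hN
  · exact .var _ _ (Nat.succ.inj e) p

/-- Replacing the most recent variable `x` of a term by a cast `x⟨c⟩`, as the reduction rule for
`case` on a wrapped sum does in each branch. -/
def castVar {C : GType} (M : LBTm v (C :: Γ) B) (c : LBCast A C) : LBTm v (A :: Γ) B :=
  (M.rename ((shiftRen (Γ := Γ) A).ext C)).subst1 (.cast (.var .z) c)

/-- The substitution performed by `castVar`. -/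
def castVarSub {C : GType} (c : LBCast A C) : Subst' LBCast (LBInert' v) (C :: Γ) (A :: Γ) :=
  fun _ x =>
    match x with
    | .z => .cast (.var .z) c
    | .s y => .var (.s y)

theorem Ren.ext_id : (Ren.ext (fun _ x => x : Ren Γ Γ) B) = (fun _ x => x) := by
  funext A x; cases x <;> rfl

theorem exts_var : (Subst'.exts (fun _ x => .var x : Subst' LBCast (LBInert' v) Γ Γ) B)
    = (fun _ x => .var x) := by
  funext A x; cases x <;> rfl

theorem subst_var (M : LBTm v Γ A) : M.subst (fun _ x => .var x) = M := by
  induction M <;> simp_all [Tm'.subst, exts_var]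

theorem exts_comp {Θ : List GType} (ρ : Ren Γ Δ) (σ : Subst' LBCast (LBInert' v) Δ Θ) :
    (fun C x => σ.exts B C (ρ.ext B C x)) = Subst'.exts (fun C x => σ C (ρ C x)) B := by
  funext C x; cases x <;> rfl

theorem rename_subst {Θ : List GType} (M : LBTm v Γ A) (ρ : Ren Γ Δ)
    (σ : Subst' LBCast (LBInert' v) Δ Θ) :
    (M.rename ρ).subst σ = M.subst (fun C x => σ C (ρ C x)) := by
  induction M generalizing Δ Θ <;> simp_all [Tm'.subst, Tm'.rename, exts_comp]

theorem castVar_eq {C : GType} (M : LBTm v (C :: Γ) B) (c : LBCast A C) :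
    castVar M c = M.subst (castVarSub c) := by
  unfold castVar Tm'.subst1
  rw [rename_subst]
  congr 1
  funext D x
  cases x <;> rfl

theorem SimRel.castVar {C C' : GType} {M : LBTm v (C :: Γ) B} {M' : LBTm v (C' :: Γ') B'}
    (h : SimRel v M M') {c : LBCast A C} {c' : LBCast A' C'} (hA : TyPrec A A') (hC : TyPrec C C') :
    SimRel v (castVar M c) (castVar M' c') := by
  rw [castVar_eq, castVar_eq]
  refine h.subst ?_
  intro C C' x x' e p
  cases x <;> cases x' <;> simp only [GVar.idx] at e <;> try omega
  · exact .cast hA hC (.var _ _ rfl hA)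
  · exact .var _ _ (by simpa [GVar.idx] using e) p

theorem SimRel.castVarL {C A' : GType} {M : LBTm v (C :: Γ) B} {M' : LBTm v (A' :: Γ') B'}
    (h : SimRel v M M') {c : LBCast A C} (hA : TyPrec A A') (hC : TyPrec C A') :
    SimRel v (_root_.castVar M c) M' := by
  rw [castVar_eq, ← subst_var M']
  refine h.subst ?_
  intro C C' x x' e p
  cases x <;> cases x' <;> simp only [GVar.idx] at e <;> try omega
  · exact .castL hA hC (.var _ _ rfl hA)
  · exact .var _ _ (by simpa [GVar.idx] using e) p

theorem SimRel.castVarR {C' : GType} {M : LBTm v (A :: Γ) B} {M' : LBTm v (C' :: Γ') B'}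
    (h : SimRel v M M') {c' : LBCast A' C'} (hA : TyPrec A A') (hC : TyPrec A C') :
    SimRel v M (_root_.castVar M' c') := by
  rw [castVar_eq, ← subst_var M]
  refine h.subst ?_
  intro C C' x x' e p
  cases x <;> cases x' <;> simp only [GVar.idx] at e <;> try omega
  · exact .castR hA hC (.var _ _ rfl hA)
  · exact .var _ _ (by simpa [GVar.idx] using e) p

/-! ### Cast insertion is monotone -/

theorem compile_rel (v : LBVariant) {M : GTerm Γ A} {N : GTerm Γ' A'} (h : GPrec M N)
    (hΓ : CtxPrec Γ Γ') : SimRel v (compile v M) (compile v N) := by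
  induction h with
  | const p k => exact .const p k
  | var x x' e => exact .var x x' e (x.prec x' hΓ e)
  | lam p _ ih => exact .lam p (ih (.cons p hΓ))
  | @app _ _ _ _ _ _ _ _ _ _ _ _ _ _ _ _ m m' _ _ _ _ ih₁ ih₂ =>
    obtain ⟨p, q⟩ := m.mono m' (ih₁ hΓ).ty
    exact .app (.cast (ih₁ hΓ).ty (.arr p q) (ih₁ hΓ)) (.cast (ih₂ hΓ).ty p (ih₂ hΓ))
  | @ite _ _ _ _ _ _ _ _ _ _ _ _ _ _ _ _ _ _ cn cn' _ _ _ ih₁ ih₂ ih₃ =>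
    have hj := cn.join_mono cn' (ih₂ hΓ).ty (ih₃ hΓ).ty
    exact .ite (.cast (ih₁ hΓ).ty (.base _) (ih₁ hΓ)) (.cast (ih₂ hΓ).ty hj (ih₂ hΓ))
      (.cast (ih₃ hΓ).ty hj (ih₃ hΓ))
  | cons _ _ ih₁ ih₂ => exact .cons (ih₁ hΓ) (ih₂ hΓ)
  | @fst _ _ _ _ _ _ _ _ _ _ _ _ m m' _ ih =>
    obtain ⟨p, q⟩ := m.mono m' (ih hΓ).ty
    exact .fst (.cast (ih hΓ).ty (.prod p q) (ih hΓ))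
  | @snd _ _ _ _ _ _ _ _ _ _ _ _ m m' _ ih =>
    obtain ⟨p, q⟩ := m.mono m' (ih hΓ).ty
    exact .snd (.cast (ih hΓ).ty (.prod p q) (ih hΓ))
  | inl p _ ih => exact .inl p (ih hΓ)
  | inr p _ ih => exact .inr p (ih hΓ)
  | @case _ _ _ _ _ _ _ _ _ _ _ _ _ _ _ _ _ _ _ _ _ _ bc bc' p q _ _ _ ih₁ ih₂ ih₃ =>
    have h₂ := ih₂ (.cons p hΓ)
    have h₃ := ih₃ (.cons q hΓ)
    have hj := bc.join_mono bc' h₂.ty h₃.ty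
    exact .case p q (.cast (ih₁ hΓ).ty (.sum p q) (ih₁ hΓ)) (.cast h₂.ty hj h₂)
      (.cast h₃.ty hj h₃)

end

/-! ### Determinism of reduction -/

/-- One-step reduction with the congruence rules spelled out frame by frame, so that its
derivations can be inverted by case analysis. -/
inductive Step : (v : LBVariant) →
    ∀ {Γ : List GType} {A : GType}, LBTm v Γ A → LBTm v Γ A → Prop
  | appL {v Γ A B} {L L' : LBTm v Γ (.arr A B)} {M : LBTm v Γ A} :
      Step v L L' → Step v (.app L M) (.app L' M)
  | appR {v Γ A B} {L : LBTm v Γ (.arr A B)} {M M' : LBTm v Γ A} :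
      LBValue v L → Step v M M' → Step v (.app L M) (.app L M')
  | ite {v Γ A} {L L' : LBTm v Γ (.base .bool)} {M N : LBTm v Γ A} :
      Step v L L' → Step v (.ite L M N) (.ite L' M N)
  | consL {v Γ A B} {M M' : LBTm v Γ A} {N : LBTm v Γ B} :
      Step v M M' → Step v (.cons M N) (.cons M' N)
  | consR {v Γ A B} {M : LBTm v Γ A} {N N' : LBTm v Γ B} :
      LBValue v M → Step v N N' → Step v (.cons M N) (.cons M N')
  | fst {v Γ A B} {M M' : LBTm v Γ (.prod A B)} : Step v M M' → Step v (.fst M) (.fst M')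
  | snd {v Γ A B} {M M' : LBTm v Γ (.prod A B)} : Step v M M' → Step v (.snd M) (.snd M')
  | inl {v Γ A B} {M M' : LBTm v Γ A} : Step v M M' → Step v (.inl B M) (.inl B M')
  | inr {v Γ A B} {M M' : LBTm v Γ B} : Step v M M' → Step v (.inr A M) (.inr A M')
  | case {v Γ A B C} {L L' : LBTm v Γ (.sum A B)} {M : LBTm v (A :: Γ) C}
      {N : LBTm v (B :: Γ) C} : Step v L L' → Step v (.case L M N) (.case L' M N)
  | cast {v Γ A B} {M M' : LBTm v Γ A} {c : LBCast A B} :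
      Step v M M' → Step v (.cast M c) (.cast M' c)
  | appLB {v Γ A B ℓ} {M : LBTm v Γ A} : Step v (.app (.blame (.arr A B) ℓ) M) (.blame B ℓ)
  | appRB {v Γ A B ℓ} {L : LBTm v Γ (.arr A B)} :
      LBValue v L → Step v (.app L (.blame A ℓ)) (.blame B ℓ)
  | iteB {v Γ A ℓ} {M N : LBTm v Γ A} : Step v (.ite (.blame _ ℓ) M N) (.blame A ℓ)
  | consLB {v Γ A B ℓ} {N : LBTm v Γ B} : Step v (.cons (.blame A ℓ) N) (.blame _ ℓ)
  | consRB {v Γ A B ℓ} {M : LBTm v Γ A} :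
      LBValue v M → Step v (.cons M (.blame B ℓ)) (.blame _ ℓ)
  | fstB {v Γ A B ℓ} : Step v (Γ := Γ) (.fst (.blame (.prod A B) ℓ)) (.blame A ℓ)
  | sndB {v Γ A B ℓ} : Step v (Γ := Γ) (.snd (.blame (.prod A B) ℓ)) (.blame B ℓ)
  | inlB {v Γ A B ℓ} : Step v (Γ := Γ) (.inl B (.blame A ℓ)) (.blame _ ℓ)
  | inrB {v Γ A B ℓ} : Step v (Γ := Γ) (.inr A (.blame B ℓ)) (.blame _ ℓ)
  | caseB {v Γ A B C ℓ} {M : LBTm v (A :: Γ) C} {N : LBTm v (B :: Γ) C} :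
      Step v (.case (.blame _ ℓ) M N) (.blame C ℓ)
  | castB {v Γ A B ℓ} {c : LBCast A B} : Step v (Γ := Γ) (.cast (.blame A ℓ) c) (.blame B ℓ)
  -- an applied inert cast becomes a wrap
  | wrap {v Γ A B} {V : LBTm v Γ A} {c : LBCast A B} (i : LBInert v c) :
      LBValue v V → Step v (.cast V c) (.wrap V c i)
  -- applyCast for the active casts
  | castId {v Γ a ℓ} (h : Consis a a) {V : LBTm v Γ a} :
      LBValue v V → Atomic a → Step v (.cast V (.mk a a ℓ h)) V
  | castInj {v Γ A ℓ} (h : Consis A .unk) {V : LBTm v Γ A} :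
      LBValue v V → A ≠ .unk → ¬ Ground A →
      Step v (.cast V (.mk A .unk ℓ h))
        (.cast (.cast V (.mk A (gnd A) ℓ (consisGnd A))) (.mk (gnd A) .unk ℓ (.unkR _)))
  | castProjEq {v Γ G ℓ₁ ℓ₂} (h₁ : Consis G .unk) (h₂ : Consis .unk G)
      {V : LBTm v Γ G} (i : LBInert v (.mk G .unk ℓ₁ h₁)) :
      LBValue v V → Ground G →
      Step v (.cast (.wrap V (.mk G .unk ℓ₁ h₁) i) (.mk .unk G ℓ₂ h₂)) V
  | castProjNeq {v Γ G B ℓ₁ ℓ₂} (h₁ : Consis G .unk) (h₂ : Consis .unk B)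
      {V : LBTm v Γ G} (i : LBInert v (.mk G .unk ℓ₁ h₁)) :
      LBValue v V → Ground G → Ground B → B ≠ G →
      Step v (.cast (.wrap V (.mk G .unk ℓ₁ h₁) i) (.mk .unk B ℓ₂ h₂)) (.blame B ℓ₂)
  | castProjGnd {v Γ G B ℓ₁ ℓ₂} (h₁ : Consis G .unk) (h₂ : Consis .unk B)
      {V : LBTm v Γ G} (i : LBInert v (.mk G .unk ℓ₁ h₁)) :
      LBValue v V → Ground G → B ≠ .unk → ¬ Ground B →
      Step v (.cast (.wrap V (.mk G .unk ℓ₁ h₁) i) (.mk .unk B ℓ₂ h₂))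
        (.cast (.cast (.wrap V (.mk G .unk ℓ₁ h₁) i) (.mk .unk (gnd B) ℓ₂ (.unkL _)))
               (.mk (gnd B) B ℓ₂ (consisGndR B)))
  -- Variant 2: pair and sum cross casts are active (eta expansion)
  | castPairV2 {Γ A B C D ℓ} (h : Consis (.prod A B) (.prod C D))
      {V : LBTm .v2 Γ (.prod A B)} : LBValue .v2 V →
      Step .v2 (.cast V (.mk _ _ ℓ h))
        (.cons (.cast (.fst V) (.mk A C ℓ h.fstP)) (.cast (.snd V) (.mk B D ℓ h.sndP)))
  | castSumV2 {Γ A B C D ℓ} (h : Consis (.sum A B) (.sum C D))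
      {V : LBTm .v2 Γ (.sum A B)} : LBValue .v2 V →
      Step .v2 (.cast V (.mk _ _ ℓ h))
        (.case V (.inl D (.cast (.var .z) (.mk A C ℓ h.inlS)))
                 (.inr C (.cast (.var .z) (.mk B D ℓ h.inrS))))
  -- elimination of values wrapped in inert cross casts
  | funCast {v Γ A B C D ℓ} (h : Consis (.arr A B) (.arr C D))
      {V : LBTm v Γ (.arr A B)} {W : LBTm v Γ C} (i : LBInert v (.mk _ _ ℓ h)) :
      LBValue v V → LBValue v W →
      Step v (.app (.wrap V (.mk _ _ ℓ h) i) W)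
              (.cast (.app V (.cast W (.mk C A ℓ h.domArr))) (.mk B D ℓ h.codArr))
  | fstCast {v Γ A B C D ℓ} (h : Consis (.prod A B) (.prod C D))
      {V : LBTm v Γ (.prod A B)} (i : LBInert v (.mk _ _ ℓ h)) : LBValue v V →
      Step v (.fst (.wrap V (.mk _ _ ℓ h) i)) (.cast (.fst V) (.mk A C ℓ h.fstP))
  | sndCast {v Γ A B C D ℓ} (h : Consis (.prod A B) (.prod C D))
      {V : LBTm v Γ (.prod A B)} (i : LBInert v (.mk _ _ ℓ h)) : LBValue v V →
      Step v (.snd (.wrap V (.mk _ _ ℓ h) i)) (.cast (.snd V) (.mk B D ℓ h.sndP))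
  | caseCast {v Γ A B C D E ℓ} (h : Consis (.sum A B) (.sum C D))
      {V : LBTm v Γ (.sum A B)} {M : LBTm v (C :: Γ) E} {N : LBTm v (D :: Γ) E}
      (i : LBInert v (.mk _ _ ℓ h)) : LBValue v V →
      Step v (.case (.wrap V (.mk _ _ ℓ h) i) M N)
        (.case V
          ((M.rename ((shiftRen (Γ := Γ) A).ext C)).subst1 (.cast (.var .z) (.mk A C ℓ h.inlS)))
          ((N.rename ((shiftRen (Γ := Γ) B).ext D)).subst1 (.cast (.var .z) (.mk B D ℓ h.inrS))))
  -- the usual STLC rules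
  | beta {v Γ A B} {M : LBTm v (A :: Γ) B} {V : LBTm v Γ A} :
      LBValue v V → Step v (.app (.lam A M) V) (M.subst1 V)
  | delta {v} {Γ : List GType} {b A} (p : Prim A) (f : Prim.rep (.fn b p))
      (k : Prim.rep (.base b)) :
      Step v (Γ := Γ) (.app (.const (.fn b p) f) (.const (.base b) k)) (.const p (f k))
  | ifTrue {v Γ A} {M N : LBTm v Γ A} :
      Step v (.ite (.const (.base .bool) true) M N) M
  | ifFalse {v Γ A} {M N : LBTm v Γ A} :
      Step v (.ite (.const (.base .bool) false) M N) N
  | betaFst {v Γ A B} {V : LBTm v Γ A} {W : LBTm v Γ B} :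
      LBValue v V → LBValue v W → Step v (.fst (.cons V W)) V
  | betaSnd {v Γ A B} {V : LBTm v Γ A} {W : LBTm v Γ B} :
      LBValue v V → LBValue v W → Step v (.snd (.cons V W)) W
  | caseL {v Γ A B C} {V : LBTm v Γ A} {M : LBTm v (A :: Γ) C} {N : LBTm v (B :: Γ) C} :
      LBValue v V → Step v (.case (.inl B V) M N) (M.subst1 V)
  | caseR {v Γ A B C} {V : LBTm v Γ B} {M : LBTm v (A :: Γ) C} {N : LBTm v (B :: Γ) C} :
      LBValue v V → Step v (.case (.inr A V) M N) (N.subst1 V)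

section
variable {v : LBVariant} {Γ Γ' : List GType} {A A' B B' : GType}

theorem LBRed.toStep {M N : LBTm v Γ A} (h : LBRed v M N) : Step v M N := by
  induction h with
  | xi F _ ih =>
    cases F with
    | appL => exact .appL ih
    | appR _ hL => exact .appR hL ih
    | ite => exact .ite ih
    | consR _ hM => exact .consR hM ih
    | consL => exact .consL ih
    | fst => exact .fst ih
    | snd => exact .snd ih
    | inl => exact .inl ih
    | inr => exact .inr ih
    | case => exact .case ih
    | cast => exact .cast ih
  | xiBlame F ℓ =>
    cases F with
    | appL => exact .appLB
    | appR _ hL => exact .appRB hL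
    | ite => exact .iteB
    | consR _ hM => exact .consRB hM
    | consL => exact .consLB
    | fst => exact .fstB
    | snd => exact .sndB
    | inl => exact .inlB
    | inr => exact .inrB
    | case => exact .caseB
    | cast => exact .castB
  | wrap i h => exact .wrap i h
  | castId h hV a => exact .castId h hV a
  | castInj h hV a b => exact .castInj h hV a b
  | castProjEq h₁ h₂ i hV g => exact .castProjEq h₁ h₂ i hV g
  | castProjNeq h₁ h₂ i hV g g' e => exact .castProjNeq h₁ h₂ i hV g g' e
  | castProjGnd h₁ h₂ i hV g a b => exact .castProjGnd h₁ h₂ i hV g a b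
  | castPairV2 h hV => exact .castPairV2 h hV
  | castSumV2 h hV => exact .castSumV2 h hV
  | funCast h i hV hW => exact .funCast h i hV hW
  | fstCast h i hV => exact .fstCast h i hV
  | sndCast h i hV => exact .sndCast h i hV
  | caseCast h i hV => exact .caseCast h i hV
  | beta h => exact .beta h
  | delta p f k => exact .delta p f k
  | ifTrue => exact .ifTrue
  | ifFalse => exact .ifFalse
  | betaFst h h' => exact .betaFst h h'
  | betaSnd h h' => exact .betaSnd h h'
  | caseL h => exact .caseL h
  | caseR h => exact .caseR h

theorem LBValue.not_step {V : LBTm v Γ A} (hV : LBValue v V) : ∀ {N}, ¬ Step v V N := by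
  induction hV with
  | lam => intro N h; cases h
  | const => intro N h; cases h
  | pair h₁ h₂ ih₁ ih₂ =>
    intro N h
    cases h with
    | consL h => exact ih₁ h
    | consR _ h => exact ih₂ h
    | consLB => cases h₁
    | consRB => cases h₂
  | inl h₁ ih =>
    intro N h
    cases h with
    | inl h => exact ih h
    | inlB => cases h₁
  | inr h₁ ih =>
    intro N h
    cases h with
    | inr h => exact ih h
    | inrB => cases h₁
  | wrap => intro N h; cases h

theorem LBInert.not_atomic {A : GType} {ℓ h} (hi : LBInert v (.mk A A ℓ h)) (ha : Atomic A) :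
    False := by
  cases ha <;> cases hi
  rename_i g; cases g

theorem LBInert.ground {A : GType} {ℓ h} (hi : LBInert v (.mk A .unk ℓ h)) : Ground A := by
  cases hi; assumption

theorem LBInert.not_proj {A : GType} {ℓ h} (hi : LBInert v (.mk .unk A ℓ h)) : False := by
  cases hi; rename_i g; cases g

theorem LBValue.not_blame {ℓ : Label} (h : LBValue v (Γ := Γ) (.blame A ℓ)) : False := by
  cases h

theorem Step.not_blame {ℓ : Label} {N : LBTm v Γ A} (h : Step v (.blame A ℓ) N) : False := by
  cases h

theorem Step.not_wrap {V : LBTm v Γ A} {c : LBCast A B} {i : LBInert v c} {N : LBTm v Γ B}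
    (h : Step v (.wrap V c i) N) : False := by
  cases h

theorem LBInert.not_prod {A B C D : GType} {ℓ h}
    (hi : LBInert .v2 (.mk (.prod A B) (.prod C D) ℓ h)) : False := by
  cases hi

theorem LBInert.not_sum {A B C D : GType} {ℓ h}
    (hi : LBInert .v2 (.mk (.sum A B) (.sum C D) ℓ h)) : False := by
  cases hi


theorem Step.det {M N N' : LBTm v Γ A} (h : Step v M N) (h' : Step v M N') : N = N' := by
  induction h <;> cases h' <;> first
    | rfl
    | (rename_i ih _ h'; rw [ih h'])
    | (rename_i ih _ _ h'; rw [ih h'])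
    | skip
  all_goals exfalso
  all_goals grind [LBValue.not_step, LBValue.not_blame, Step.not_blame, Step.not_wrap,
    LBValue.lam, LBValue.const, LBValue.pair, LBValue.inl, LBValue.inr, LBInert.not_atomic,
    LBInert.ground, LBInert.not_proj, LBInert.not_prod, LBInert.not_sum, Ground.ne_unk, Atomic]

theorem LBRed.det {M N N' : LBTm v Γ A} (h : LBRed v M N) (h' : LBRed v M N') : N = N' :=
  h.toStep.det h'.toStep

end

/-! ### Outcomes of evaluation -/

theorem Step.toRed {v : LBVariant} {Γ : List GType} {A : GType} {M N : LBTm v Γ A}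
    (h : Step v M N) : LBRed v M N := by
  induction h with
  | @appL _ _ _ _ _ _ M _ ih => exact .xi (.appL M) ih
  | appR h _ ih => exact .xi (.appR _ h) ih
  | @ite _ _ _ _ _ M N _ ih => exact .xi (.ite M N) ih
  | @consL _ _ _ _ _ _ N _ ih => exact .xi (.consL N) ih
  | consR h _ ih => exact .xi (.consR _ h) ih
  | fst _ ih => exact .xi .fst ih
  | snd _ ih => exact .xi .snd ih
  | @inl _ _ _ B _ _ _ ih => exact .xi (.inl B) ih
  | @inr _ _ A _ _ _ _ ih => exact .xi (.inr A) ih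
  | @case _ _ _ _ _ _ _ M N _ ih => exact .xi (.case M N) ih
  | @cast _ _ _ _ _ _ c _ ih => exact .xi (.cast c) ih
  | @appLB _ _ A B ℓ M => exact .xiBlame (.appL M) ℓ
  | @appRB _ _ A B ℓ L h => exact .xiBlame (.appR L h) ℓ
  | @iteB _ _ _ ℓ M N => exact .xiBlame (.ite M N) ℓ
  | @consLB _ _ A B ℓ N => exact .xiBlame (A := A) (.consL N) ℓ
  | @consRB _ _ A B ℓ M h => exact .xiBlame (A := B) (.consR M h) ℓ
  | @fstB _ _ A B ℓ => exact .xiBlame (A := .prod A B) .fst ℓ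
  | @sndB _ _ A B ℓ => exact .xiBlame (A := .prod A B) .snd ℓ
  | @inlB _ _ A B ℓ => exact .xiBlame (A := A) (.inl B) ℓ
  | @inrB _ _ A B ℓ => exact .xiBlame (A := B) (.inr A) ℓ
  | @caseB _ _ _ _ _ ℓ M N => exact .xiBlame (.case M N) ℓ
  | @castB _ _ _ _ ℓ c => exact .xiBlame (.cast c) ℓ
  | wrap i h => exact .wrap i h
  | castId h hV a => exact .castId h hV a
  | castInj h hV a b => exact .castInj h hV a b
  | castProjEq h₁ h₂ i hV g => exact .castProjEq h₁ h₂ i hV g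
  | castProjNeq h₁ h₂ i hV g g' e => exact .castProjNeq h₁ h₂ i hV g g' e
  | castProjGnd h₁ h₂ i hV g a b => exact .castProjGnd h₁ h₂ i hV g a b
  | castPairV2 h hV => exact .castPairV2 h hV
  | castSumV2 h hV => exact .castSumV2 h hV
  | funCast h i hV hW => exact .funCast h i hV hW
  | fstCast h i hV => exact .fstCast h i hV
  | sndCast h i hV => exact .sndCast h i hV
  | caseCast h i hV => exact .caseCast h i hV
  | beta h => exact .beta h
  | delta p f k => exact .delta p f k
  | ifTrue => exact .ifTrue
  | ifFalse => exact .ifFalse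
  | betaFst h h' => exact .betaFst h h'
  | betaSnd h h' => exact .betaSnd h h'
  | caseL h => exact .caseL h
  | caseR h => exact .caseR h

/-- Evaluation frames of λB′. -/
abbrev Fr (v : LBVariant) := Frame' LBCast (LBInert' v) (@LBValue v)

section
variable {v : LBVariant} {Γ Γ' : List GType} {A A' B B' : GType}

/-- `M` admits no reduction step. -/
def Irred (M : LBTm v Γ A) : Prop := ∀ M', ¬ LBRed v M M'

theorem LBValue.irred {V : LBTm v Γ A} (h : LBValue v V) : Irred V :=
  fun _ r => h.not_step r.toStep

theorem irred_blame {ℓ : Label} : Irred (v := v) (Γ := Γ) (.blame A ℓ) :=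
  fun _ r => r.toStep.not_blame

theorem Irred.reds {M N : LBTm v Γ A} (h : Irred M) (r : LBReds v M N) : N = M := by
  induction r using Relation.ReflTransGen.head_induction_on with
  | refl => rfl
  | head s _ _ => exact absurd s (h _)

theorem irred_unique {M N N' : LBTm v Γ A} (r : LBReds v M N) (r' : LBReds v M N')
    (h : Irred N) (h' : Irred N') : N = N' := by
  induction r using Relation.ReflTransGen.head_induction_on with
  | refl => exact (h.reds r').symm
  | head s _ ih =>
    rcases r'.cases_head with e | ⟨c, s', r'⟩
    · subst e; exact absurd s (h' _)
    · cases s.det s'; exact ih r'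

/-- Irreducible terms that are neither values nor blame; they arise only because terms may be
open. -/
def Stuck (M : LBTm v Γ A) : Prop := Irred M ∧ ¬ LBValue v M ∧ ∀ ℓ, M ≠ .blame A ℓ

theorem Stuck.var (x : GVar Γ A) : Stuck (v := v) (.var x) := by
  refine ⟨fun _ r => ?_, fun h => ?_, fun _ h => ?_⟩
  · have s := r.toStep
    cases s
  · cases h
  · cases h

theorem Stuck.plug {M : LBTm v Γ A} (h : Stuck M) (F : Fr v Γ A B) : Stuck (plug' M F) := by
  obtain ⟨hi, hv, hb⟩ := h
  have hs : ∀ M', ¬ Step v M M' := fun M' s => hi M' s.toRed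
  refine ⟨fun M' r => ?_, ?_, fun ℓ => by cases F <;> simp [plug']⟩
  · have s := r.toStep
    cases F <;> simp only [plug'] at s <;> cases s <;>
      first
        | exact hs _ (by assumption)
        | exact hv (by assumption)
        | exact hb _ rfl
        | exact hv .const
        | exact hv .lam
        | exact hv (.wrap (by assumption))
        | exact hv (.pair (by assumption) (by assumption))
        | exact hv (.inl (by assumption))
        | exact hv (.inr (by assumption))
        | exact LBValue.not_step (by assumption) (by assumption)
        | exact LBValue.not_blame (by assumption)
  · cases F <;> simp only [plug'] <;> intro h <;> cases h <;> exact hv (by assumption)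

theorem reds_plug {M N : LBTm v Γ A} (F : Fr v Γ A B) (r : LBReds v M N) :
    LBReds v (plug' M F) (plug' N F) := by
  induction r with
  | refl => exact .refl
  | tail _ s ih => exact ih.tail (.xi F s)

theorem red_cast {M N : LBTm v Γ A} (c : LBCast A B) (s : LBRed v M N) :
    LBRed v (.cast M c) (.cast N c) :=
  .xi (.cast c) s

theorem reds_cast {M N : LBTm v Γ A} (c : LBCast A B) (r : LBReds v M N) :
    LBReds v (.cast M c) (.cast N c) :=
  reds_plug (.cast c) r

theorem reds_plug_blame {M : LBTm v Γ A} {ℓ : Label} (F : Fr v Γ A B)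
    (r : LBReds v M (.blame A ℓ)) : LBReds v (plug' M F) (.blame B ℓ) :=
  (reds_plug F r).tail (.xiBlame F ℓ)

theorem reds_cast_blame {M : LBTm v Γ A} {ℓ : Label} (c : LBCast A B)
    (r : LBReds v M (.blame A ℓ)) : LBReds v (.cast M c) (.blame B ℓ) :=
  reds_plug_blame (.cast c) r

/-- Reduction from `M` stops after at most `n` steps. -/
inductive Halts : ℕ → LBTm v Γ A → Prop
  | irr {n : ℕ} {M : LBTm v Γ A} : Irred M → Halts n M
  | step {n : ℕ} {M M' : LBTm v Γ A} : LBRed v M M' → Halts n M' → Halts (n + 1) M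

theorem Halts.mono {n m : ℕ} {M : LBTm v Γ A} (h : Halts n M) (hm : n ≤ m) : Halts m M := by
  induction h generalizing m with
  | irr h => exact .irr h
  | step s _ ih =>
    obtain ⟨k, rfl⟩ : ∃ k, m = k + 1 := ⟨m - 1, by omega⟩
    exact .step s (ih (by omega))

theorem Halts.of_step {n : ℕ} {M M' : LBTm v Γ A} (h : Halts n M) (s : LBRed v M M') :
    ∃ m, n = m + 1 ∧ Halts m M' := by
  cases h with
  | irr h => exact absurd s (h _)
  | step s' h => cases s.det s'; exact ⟨_, rfl, h⟩

theorem Halts.reds {n : ℕ} {M M' : LBTm v Γ A} (h : Halts n M) (r : LBReds v M M') :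
    Halts n M' := by
  induction r with
  | refl => exact h
  | tail _ s ih =>
    obtain ⟨m, rfl, hm⟩ := ih.of_step s
    exact hm.mono (by omega)

theorem Halts.unplug {n : ℕ} {M : LBTm v Γ A} (F : Fr v Γ A B) (h : Halts n (plug' M F)) :
    Halts n M := by
  induction n generalizing M with
  | zero =>
    refine .irr fun M' s => ?_
    obtain ⟨m, e, -⟩ := h.of_step (.xi F s)
    omega
  | succ n ih =>
    by_cases hM : Irred M
    · exact .irr hM
    · simp only [Irred, not_forall, not_not] at hM
      obtain ⟨M', s⟩ := hM
      obtain ⟨m, e, h⟩ := h.of_step (.xi F s)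
      obtain rfl : n = m := by omega
      exact .step s (ih h)

theorem halts_of_reds {M N : LBTm v Γ A} (r : LBReds v M N) (h : Irred N) :
    ∃ n, Halts n M := by
  induction r using Relation.ReflTransGen.head_induction_on with
  | refl => exact ⟨0, .irr h⟩
  | head s _ ih => obtain ⟨n, h⟩ := ih; exact ⟨n + 1, .step s h⟩

theorem Halts.not_diverges {n : ℕ} {M : LBTm v Γ A} (h : Halts n M) : ¬ LBDiverges v M := by
  rintro ⟨f, h0, hf⟩
  induction h generalizing f with
  | irr h => exact h _ (h0 ▸ hf 0)
  | step s _ ih =>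
    refine ih (fun n => f (n + 1)) ?_ (fun n => hf (n + 1))
    exact (h0 ▸ hf 0 : LBRed v _ _).det s

theorem halts_or_diverges (M : LBTm v Γ A) : (∃ n, Halts n M) ∨ LBDiverges v M := by
  by_cases h : ∃ n, Halts n M
  · exact .inl h
  · right
    have key : ∀ N : {N : LBTm v Γ A // ¬ ∃ n, Halts n N},
        ∃ N' : {N : LBTm v Γ A // ¬ ∃ n, Halts n N}, LBRed v N.1 N'.1 := by
      rintro ⟨N, hN⟩
      by_cases hi : Irred N
      · exact absurd ⟨0, .irr hi⟩ hN
      · simp only [Irred, not_forall, not_not] at hi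
        obtain ⟨N', s⟩ := hi
        exact ⟨⟨N', fun ⟨n, h⟩ => hN ⟨n + 1, .step s h⟩⟩, s⟩
    choose next hnext using key
    refine ⟨fun n => (next^[n] ⟨M, h⟩).1, rfl, fun n => ?_⟩
    simp only [Function.iterate_succ_apply']
    exact hnext _

/-- The possible joint outcomes of evaluating a more precise `N` next to `M`: `N` ends in
blame, or both end in related values, or both get stuck. -/
def Out (M : LBTm v Γ A) (N : LBTm v Γ' A') : Prop :=
  (∃ ℓ, LBReds v N (.blame A' ℓ)) ∨
  (∃ V W, LBReds v M V ∧ LBReds v N W ∧ LBValue v V ∧ LBValue v W ∧ SimRel v V W) ∨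
  ((∃ S, LBReds v M S ∧ Stuck S) ∧ (∃ S, LBReds v N S ∧ Stuck S))

/-- One of the two terms halts within `n` steps. -/
def HE (n : ℕ) (M : LBTm v Γ A) (N : LBTm v Γ' A') : Prop := Halts n M ∨ Halts n N

variable {M M₁ : LBTm v Γ A} {N N₁ : LBTm v Γ' A'}

theorem HE.reds {n : ℕ} (h : HE n M N) (r : LBReds v M M₁) (r' : LBReds v N N₁) :
    HE n M₁ N₁ :=
  h.imp (·.reds r) (·.reds r')

theorem HE.steps {n : ℕ} (h : HE n M N) (r : LBRed v M M₁) (r' : LBRed v N N₁) :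
    ∃ m, m < n ∧ HE m M₁ N₁ := by
  rcases h with h | h
  · obtain ⟨m, rfl, hm⟩ := h.of_step r
    exact ⟨m, by omega, .inl hm⟩
  · obtain ⟨m, rfl, hm⟩ := h.of_step r'
    exact ⟨m, by omega, .inr hm⟩

theorem HE.unplug {n : ℕ} {F : Fr v Γ A B} {F' : Fr v Γ' A' B'}
    (h : HE n (plug' M F) (plug' N F')) : HE n M N :=
  h.imp (·.unplug F) (·.unplug F')

theorem HE.unplugL {n : ℕ} {F : Fr v Γ A B} (h : HE n (plug' M F) N) : HE n M N :=
  h.imp (·.unplug F) id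

theorem HE.unplugR {n : ℕ} {F' : Fr v Γ' A' B'} (h : HE n M (plug' N F')) : HE n M N :=
  h.imp id (·.unplug F')

theorem Out.anti (h : Out M₁ N₁) (r : LBReds v M M₁) (r' : LBReds v N N₁) : Out M N := by
  rcases h with ⟨ℓ, h⟩ | ⟨V, W, h₁, h₂, h⟩ | ⟨⟨S, h₁, h₂⟩, ⟨S', h₃, h₄⟩⟩
  · exact .inl ⟨ℓ, r'.trans h⟩
  · exact .inr (.inl ⟨V, W, r.trans h₁, r'.trans h₂, h⟩)
  · exact .inr (.inr ⟨⟨S, r.trans h₁, h₂⟩, ⟨S', r'.trans h₃, h₄⟩⟩)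

theorem Out.val (hM : LBValue v M) (hN : LBValue v N) (h : SimRel v M N) : Out M N :=
  .inr (.inl ⟨M, N, .refl, .refl, hM, hN, h⟩)

/-- Inversion of `Out` when the left-hand term is already a value. -/
theorem Out.of_val (h : Out M N) (hM : LBValue v M) :
    (∃ ℓ, LBReds v N (.blame A' ℓ)) ∨ ∃ W, LBReds v N W ∧ LBValue v W ∧ SimRel v M W := by
  rcases h with h | ⟨V, W, h₁, h₂, h₃, h₄, h₅⟩ | ⟨⟨S, h₁, h₂⟩, _⟩
  · exact .inl h
  · cases hM.irred.reds h₁; exact .inr ⟨W, h₂, h₄, h₅⟩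
  · cases hM.irred.reds h₁; exact absurd hM h₂.2.1

theorem Out.bind (F : Fr v Γ A B) (F' : Fr v Γ' A' B') (h : Out M N)
    (k : ∀ V W, LBReds v M V → LBReds v N W → LBValue v V → LBValue v W → SimRel v V W →
      Out (plug' V F) (plug' W F')) : Out (plug' M F) (plug' N F') := by
  rcases h with ⟨ℓ, h⟩ | ⟨V, W, h₁, h₂, h₃, h₄, h₅⟩ | ⟨⟨S, h₁, h₂⟩, ⟨S', h₃, h₄⟩⟩
  · exact .inl ⟨ℓ, reds_plug_blame F' h⟩
  · exact (k V W h₁ h₂ h₃ h₄ h₅).anti (reds_plug F h₁) (reds_plug F' h₂)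
  · exact .inr (.inr ⟨⟨_, reds_plug F h₁, h₂.plug F⟩, ⟨_, reds_plug F' h₃, h₄.plug F'⟩⟩)

theorem Out.bindL (F : Fr v Γ A B) (h : Out M N)
    (k : ∀ V W, LBReds v M V → LBReds v N W → LBValue v V → LBValue v W → SimRel v V W →
      Out (plug' V F) W) : Out (plug' M F) N := by
  rcases h with ⟨ℓ, h⟩ | ⟨V, W, h₁, h₂, h₃, h₄, h₅⟩ | ⟨⟨S, h₁, h₂⟩, h⟩
  · exact .inl ⟨ℓ, h⟩
  · exact (k V W h₁ h₂ h₃ h₄ h₅).anti (reds_plug F h₁) h₂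
  · exact .inr (.inr ⟨⟨_, reds_plug F h₁, h₂.plug F⟩, h⟩)

theorem Out.bindR (F' : Fr v Γ' A' B') (h : Out M N)
    (k : ∀ V W, LBReds v M V → LBReds v N W → LBValue v V → LBValue v W → SimRel v V W →
      Out V (plug' W F')) : Out M (plug' N F') := by
  rcases h with ⟨ℓ, h⟩ | ⟨V, W, h₁, h₂, h₃, h₄, h₅⟩ | ⟨h, ⟨S', h₃, h₄⟩⟩
  · exact .inl ⟨ℓ, reds_plug_blame F' h⟩
  · exact (k V W h₁ h₂ h₃ h₄ h₅).anti h₁ (reds_plug F' h₂)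
  · exact .inr (.inr ⟨h, ⟨_, reds_plug F' h₃, h₄.plug F'⟩⟩)

theorem Out.cons {M₂ : LBTm v Γ B} {N₂ : LBTm v Γ' B'} (h : Out M N) (h' : Out M₂ N₂) :
    Out (.cons M M₂) (.cons N N₂) :=
  Out.bind (.consL M₂) (.consL N₂) h fun V W _ _ hV hW r =>
    Out.bind (.consR V hV) (.consR W hW) h' fun _ _ _ _ hV' hW' r' =>
      .val (.pair hV hV') (.pair hW hW') (.cons r r')

theorem Out.injL (p : TyPrec B B') (h : Out M N) : Out (.inl B M) (.inl B' N) :=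
  Out.bind (.inl B) (.inl B') h fun _ _ _ _ hV hW r => .val (.inl hV) (.inl hW) (.inl p r)

theorem Out.injR (p : TyPrec B B') (h : Out M N) : Out (.inr B M) (.inr B' N) :=
  Out.bind (.inr B) (.inr B') h fun _ _ _ _ hV hW r => .val (.inr hV) (.inr hW) (.inr p r)

end

/-! ### Casts preserve the simulation -/

/-- The number of nodes of a type. -/
def GType.nodes : GType → ℕ
  | .base _ => 1
  | .unk => 1
  | .arr A B => A.nodes + B.nodes + 1
  | .prod A B => A.nodes + B.nodes + 1
  | .sum A B => A.nodes + B.nodes + 1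

theorem GType.nodes_pos (A : GType) : 0 < A.nodes := by
  cases A <;> simp [GType.nodes]

theorem nodes_gnd (A : GType) : (gnd A).nodes ≤ A.nodes := by
  cases A with
  | base => exact le_rfl
  | unk => exact le_rfl
  | arr A B => have := A.nodes_pos; have := B.nodes_pos; simp only [gnd, GType.nodes]; omega
  | prod A B => have := A.nodes_pos; have := B.nodes_pos; simp only [gnd, GType.nodes]; omega
  | sum A B => have := A.nodes_pos; have := B.nodes_pos; simp only [gnd, GType.nodes]; omega

section
variable {v : LBVariant} {Γ Γ' : List GType} {A A' B B' : GType}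

/-- Related values of unknown type are injections from the same ground type. -/
theorem canon_unk_unk {V : LBTm v Γ .unk} {W : LBTm v Γ' .unk} (hV : LBValue v V)
    (hW : LBValue v W) (h : SimRel v V W) :
    ∃ (G : GType) (ℓ ℓ' : Label) (c : Consis G .unk) (c' : Consis G .unk)
      (i : LBInert v (.mk G .unk ℓ c)) (i' : LBInert v (.mk G .unk ℓ' c'))
      (V₁ : LBTm v Γ G) (W₁ : LBTm v Γ' G), V = .wrap V₁ _ i ∧ W = .wrap W₁ _ i' ∧
      Ground G ∧ LBValue v V₁ ∧ LBValue v W₁ ∧ SimRel v V₁ W₁ := by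
  cases hV with
  | const => rename_i p k; cases p
  | wrap h₁ =>
    cases h with
    | wrap _ h₂ c r e =>
      cases c with
      | inj g => exact ⟨_, _, _, _, _, _, _, _, _, rfl, rfl, g, h₁, h₂, r⟩
    | wrapL _ c r =>
      cases c with
      | inj g p => exact absurd p.to_unk g.ne_unk
    | wrapR _ _ _ e => exact absurd rfl e
    | castR => cases hW
    | blame => cases hW

/-- A value of unknown type that is less precise than a value `W` of a known type is an
injection of a value less precise than `W`. -/
theorem canon_unk {V : LBTm v Γ .unk} {W : LBTm v Γ' A'} (hV : LBValue v V)
    (hW : LBValue v W) (h : SimRel v V W) (hA : A' ≠ .unk)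
    {G : GType} (hG : gnd A' = G) :
    ∃ (ℓ : Label) (c : Consis G .unk) (i : LBInert v (.mk G .unk ℓ c))
      (V₁ : LBTm v Γ G), V = .wrap V₁ _ i ∧ LBValue v V₁ ∧ SimRel v V₁ W := by
  cases hV with
  | const => rename_i p k; cases p
  | wrap h₁ =>
    cases h with
    | wrap _ h₂ c r e => exact absurd (e rfl) hA
    | wrapL _ c r =>
      cases c with
      | inj g p =>
        obtain rfl := (g.gnd_self.symm.trans (gnd_eq p g.ne_unk)).trans hG
        exact ⟨_, _, _, _, rfl, h₁, r⟩
    | wrapR _ _ _ e => exact absurd rfl e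
    | castR => cases hW
    | blame => cases hW

theorem canon_prod {V : LBTm .v2 Γ (.prod A B)} {W : LBTm .v2 Γ' (.prod A' B')}
    (hV : LBValue .v2 V) (hW : LBValue .v2 W) (h : SimRel .v2 V W) :
    ∃ V₁ V₂ W₁ W₂, V = .cons V₁ V₂ ∧ W = .cons W₁ W₂ ∧ LBValue .v2 V₁ ∧ LBValue .v2 V₂ ∧
      LBValue .v2 W₁ ∧ LBValue .v2 W₂ ∧ SimRel .v2 V₁ W₁ ∧ SimRel .v2 V₂ W₂ := by
  cases hV with
  | const => rename_i p k; cases p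
  | wrap h₁ => rename_i i; cases i
  | pair h₁ h₂ =>
    cases hW with
    | const => rename_i p k; cases p
    | wrap h₁ => rename_i i; cases i
    | pair h₃ h₄ =>
      cases h with
      | cons r s => exact ⟨_, _, _, _, rfl, rfl, h₁, h₂, h₃, h₄, r, s⟩

theorem canon_sum {V : LBTm .v2 Γ (.sum A B)} {W : LBTm .v2 Γ' (.sum A' B')}
    (hV : LBValue .v2 V) (hW : LBValue .v2 W) (h : SimRel .v2 V W) :
    (∃ V₁ W₁, V = .inl B V₁ ∧ W = .inl B' W₁ ∧ LBValue .v2 V₁ ∧ LBValue .v2 W₁ ∧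
      SimRel .v2 V₁ W₁) ∨
    (∃ V₁ W₁, V = .inr A V₁ ∧ W = .inr A' W₁ ∧ LBValue .v2 V₁ ∧ LBValue .v2 W₁ ∧
      SimRel .v2 V₁ W₁) := by
  cases hV with
  | const => rename_i p k; cases p
  | wrap => rename_i i; cases i
  | inl h₁ =>
    cases hW with
    | const => rename_i p k; cases p
    | wrap => rename_i i; cases i
    | inl h₂ => cases h with | inl _ r => exact .inl ⟨_, _, rfl, rfl, h₁, h₂, r⟩
    | inr h₂ => cases h
  | inr h₁ =>
    cases hW with
    | const => rename_i p k; cases p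
    | wrap => rename_i i; cases i
    | inl h₂ => cases h
    | inr h₂ => cases h with | inr _ r => exact .inr ⟨_, _, rfl, rfl, h₁, h₂, r⟩

theorem reds_castFst {V₁ : LBTm v Γ A} {V₂ : LBTm v Γ B} (h₁ : LBValue v V₁)
    (h₂ : LBValue v V₂) (c : LBCast A A') :
    LBReds v (.cast (.fst (.cons V₁ V₂)) c) (.cast V₁ c) :=
  .single (.xi (.cast c) (.betaFst h₁ h₂))

theorem reds_castSnd {V₁ : LBTm v Γ A} {V₂ : LBTm v Γ B} (h₁ : LBValue v V₁)
    (h₂ : LBValue v V₂) (c : LBCast B A') :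
    LBReds v (.cast (.snd (.cons V₁ V₂)) c) (.cast V₂ c) :=
  .single (.xi (.cast c) (.betaSnd h₁ h₂))

theorem reds_castInl {C D : GType} {V₁ : LBTm .v2 Γ A} (h₁ : LBValue .v2 V₁) {ℓ : Label}
    (h : Consis (.sum A B) (.sum C D)) :
    LBReds .v2 (.cast (.inl B V₁) (.mk _ _ ℓ h)) (.inl D (.cast V₁ (.mk A C ℓ h.inlS))) :=
  .trans (.single (.castSumV2 h (.inl h₁))) (.single (.caseL h₁))

theorem reds_castInr {C D : GType} {V₁ : LBTm .v2 Γ B} (h₁ : LBValue .v2 V₁) {ℓ : Label}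
    (h : Consis (.sum A B) (.sum C D)) :
    LBReds .v2 (.cast (.inr A V₁) (.mk _ _ ℓ h)) (.inr C (.cast V₁ (.mk B D ℓ h.inrS))) :=
  .trans (.single (.castSumV2 h (.inr h₁))) (.single (.caseR h₁))

/-- Casting the less precise of two related values, for casts between types with fewer than
`m` nodes. -/
def CastLBelow (v : LBVariant) (Γ Γ' : List GType) (m : ℕ) : Prop :=
  ∀ (A B A' : GType) (V : LBTm v Γ A) (W : LBTm v Γ' A') (ℓ : Label) (h : Consis A B),
    A.nodes < m → B.nodes < m → TyPrec A A' → TyPrec B A' →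
    LBValue v V → LBValue v W → SimRel v V W → Out (.cast V (.mk A B ℓ h)) W

/-- The same with both types different from `?`: only cross casts and identities at base types
remain, so that smaller casts suffice. -/
theorem castL_cross {m : ℕ} (ih : CastLBelow v Γ Γ' m) {V : LBTm v Γ A} {W : LBTm v Γ' A'}
    {ℓ : Label} (h : Consis A B) (hA : A.nodes < m + 1) (hB : B.nodes < m + 1)
    (nA : A ≠ .unk) (nB : B ≠ .unk) (p : TyPrec A A') (q : TyPrec B A')
    (hV : LBValue v V) (hW : LBValue v W) (r : SimRel v V W) :
    Out (.cast V (.mk A B ℓ h)) W := by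
  cases p with
  | unk => exact absurd rfl nA
  | base b =>
    cases q with
    | unk => exact absurd rfl nB
    | base => exact (Out.val hV hW r).anti (.single (.castId h hV (.base _))) .refl
  | arr p₁ p₂ =>
    cases q with
    | unk => exact absurd rfl nB
    | arr q₁ q₂ =>
      exact (Out.val (.wrap (i := .arr v) hV) hW
        (.wrapL hV (.arr (.arr p₁ p₂) (.arr q₁ q₂)) r)).anti (.single (.wrap _ hV)) .refl
  | prod p₁ p₂ =>
    cases q with
    | unk => exact absurd rfl nB
    | prod q₁ q₂ =>
      cases v with
      | v1 =>
        exact (Out.val (.wrap (i := .prod) hV) hW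
          (.wrapL hV (.prod (.prod p₁ p₂) (.prod q₁ q₂)) r)).anti (.single (.wrap _ hV)) .refl
      | v2 =>
        obtain ⟨V₁, V₂, W₁, W₂, rfl, rfl, a, b, c, d, r, s⟩ := canon_prod hV hW r
        simp only [GType.nodes] at hA hB
        refine Out.anti (Out.cons ?_ ?_) (.single (.castPairV2 h hV)) .refl
        · exact (ih _ _ _ _ _ _ _ (by omega) (by omega) p₁ q₁ a c r).anti
            (reds_castFst a b _) .refl
        · exact (ih _ _ _ _ _ _ _ (by omega) (by omega) p₂ q₂ b d s).anti
            (reds_castSnd a b _) .refl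
  | sum p₁ p₂ =>
    cases q with
    | unk => exact absurd rfl nB
    | sum q₁ q₂ =>
      cases v with
      | v1 =>
        exact (Out.val (.wrap (i := .sum) hV) hW
          (.wrapL hV (.sum (.sum p₁ p₂) (.sum q₁ q₂)) r)).anti (.single (.wrap _ hV)) .refl
      | v2 =>
        simp only [GType.nodes] at hA hB
        rcases canon_sum hV hW r with ⟨V₁, W₁, rfl, rfl, a, c, r⟩ | ⟨V₁, W₁, rfl, rfl, a, c, r⟩
        · exact Out.anti (Out.injL q₂ (ih _ _ _ _ _ _ _ (by omega) (by omega) p₁ q₁ a c r))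
            (reds_castInl a h) .refl
        · exact Out.anti (Out.injR q₁ (ih _ _ _ _ _ _ _ (by omega) (by omega) p₂ q₂ a c r))
            (reds_castInr a h) .refl

theorem castL_below (m : ℕ) : CastLBelow v Γ Γ' m := by
  induction m with
  | zero => intro A B A' V W ℓ h hA; omega
  | succ m ih =>
    intro A B A' V W ℓ h hA hB p q hV hW r
    have gA := nodes_gnd A
    have gB := nodes_gnd B
    by_cases nA : A = .unk
    · subst nA
      by_cases nB : B = .unk
      · subst nB
        exact (Out.val hV hW r).anti (.single (.castId h hV .unk)) .refl
      · have nA' : A' ≠ .unk := fun e => nB (e ▸ q).to_unk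
        have eg := gnd_eq q nB
        obtain ⟨ℓ', c, i, V₁, rfl, hV₁, r₁⟩ := canon_unk hV hW r nA' eg.symm
        have g := gnd_ground nB
        have key : ∀ e : Consis (gnd B) B, Out (.cast V₁ (.mk (gnd B) B ℓ e)) W := fun e =>
          castL_cross ih _ (by omega) hB g.ne_unk nB ((gnd_prec B).trans' q) q hV₁ hW r₁
        by_cases gB' : Ground B
        · have e := gB'.gnd_self
          clear key
          revert V₁ c i
          rw [e]
          intro c i V₁ hV r hV₁ r₁
          exact (Out.val hV₁ hW r₁).anti (.single (.castProjEq c h i hV₁ gB')) .refl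
        · refine (key (consisGndR B)).anti (.trans (.single (.castProjGnd c h i hV₁ g nB gB')) ?_)
            .refl
          exact .single (red_cast _ (.castProjEq c _ i hV₁ g))
    · by_cases nB : B = .unk
      · subst nB
        by_cases gA' : Ground A
        · exact (Out.val (.wrap (i := .inj v gA') hV) hW
            (.wrapL hV (.inj gA' p) r)).anti (.single (.wrap _ hV)) .refl
        · have g := gnd_ground nA
          have gp : TyPrec (gnd A) A' := (gnd_prec A).trans' p
          have key : Out (.cast V (.mk A (gnd A) ℓ (consisGnd A))) W :=
            castL_cross ih _ hA (by omega) nA g.ne_unk p gp hV hW r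
          refine Out.anti (Out.bindL (.cast (.mk (gnd A) .unk ℓ (.unkR _))) key ?_)
            (.single (.castInj h hV nA gA')) .refl
          intro V' W' _ _ hV' hW' r'
          exact (Out.val (.wrap (i := .inj v g) hV') hW'
            (.wrapL hV' (.inj g gp) r')).anti (.single (.wrap _ hV')) .refl
      · exact castL_cross ih h hA hB nA nB p q hV hW r

/-- Casting the less precise of two related values. -/
theorem castL {V : LBTm v Γ A} {W : LBTm v Γ' A'} {ℓ : Label} (h : Consis A B)
    (p : TyPrec A A') (q : TyPrec B A') (hV : LBValue v V) (hW : LBValue v W)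
    (r : SimRel v V W) : Out (.cast V (.mk A B ℓ h)) W :=
  castL_below (A.nodes + B.nodes + 1) A B A' V W ℓ h (by omega) (by omega) p q hV hW r

/-- Casting the more precise of two related values, for casts between types with fewer than
`m` nodes. -/
def CastRBelow (v : LBVariant) (Γ Γ' : List GType) (m : ℕ) : Prop :=
  ∀ (A A' B' : GType) (V : LBTm v Γ A) (W : LBTm v Γ' A') (ℓ : Label) (h : Consis A' B'),
    A'.nodes < m → B'.nodes < m → TyPrec A A' → TyPrec A B' →
    LBValue v V → LBValue v W → SimRel v V W → Out V (.cast W (.mk A' B' ℓ h))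

theorem castR_cross {m : ℕ} (ih : CastRBelow v Γ Γ' m) {V : LBTm v Γ A} {W : LBTm v Γ' A'}
    {ℓ : Label} (h : Consis A' B') (hA : A'.nodes < m + 1) (hB : B'.nodes < m + 1)
    (nA : A ≠ .unk) (p : TyPrec A A') (q : TyPrec A B')
    (hV : LBValue v V) (hW : LBValue v W) (r : SimRel v V W) :
    Out V (.cast W (.mk A' B' ℓ h)) := by
  cases p with
  | unk => exact absurd rfl nA
  | base b =>
    cases q with
    | base => exact (Out.val hV hW r).anti .refl (.single (.castId h hW (.base _)))
  | arr p₁ p₂ =>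
    cases q with
    | arr q₁ q₂ =>
      exact (Out.val hV (.wrap (i := .arr v) hW)
        (.wrapR hW (.arr (.arr p₁ p₂) (.arr q₁ q₂)) r nA)).anti .refl (.single (.wrap _ hW))
  | prod p₁ p₂ =>
    cases q with
    | prod q₁ q₂ =>
      cases v with
      | v1 =>
        exact (Out.val hV (.wrap (i := .prod) hW)
          (.wrapR hW (.prod (.prod p₁ p₂) (.prod q₁ q₂)) r nA)).anti .refl
          (.single (.wrap _ hW))
      | v2 =>
        obtain ⟨V₁, V₂, W₁, W₂, rfl, rfl, a, b, c, d, r, s⟩ := canon_prod hV hW r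
        simp only [GType.nodes] at hA hB
        refine Out.anti (Out.cons ?_ ?_) .refl (.single (.castPairV2 h hW))
        · exact (ih _ _ _ _ _ _ _ (by omega) (by omega) p₁ q₁ a c r).anti
            .refl (reds_castFst c d _)
        · exact (ih _ _ _ _ _ _ _ (by omega) (by omega) p₂ q₂ b d s).anti
            .refl (reds_castSnd c d _)
  | sum p₁ p₂ =>
    cases q with
    | sum q₁ q₂ =>
      cases v with
      | v1 =>
        exact (Out.val hV (.wrap (i := .sum) hW)
          (.wrapR hW (.sum (.sum p₁ p₂) (.sum q₁ q₂)) r nA)).anti .refl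
          (.single (.wrap _ hW))
      | v2 =>
        simp only [GType.nodes] at hA hB
        rcases canon_sum hV hW r with ⟨V₁, W₁, rfl, rfl, a, c, r⟩ | ⟨V₁, W₁, rfl, rfl, a, c, r⟩
        · exact Out.anti (Out.injL q₂ (ih _ _ _ _ _ _ _ (by omega) (by omega) p₁ q₁ a c r))
            .refl (reds_castInl c h)
        · exact Out.anti (Out.injR q₁ (ih _ _ _ _ _ _ _ (by omega) (by omega) p₂ q₂ a c r))
            .refl (reds_castInr c h)

/-- Wrapping the less precise side of an outcome in an injection. -/
theorem Out.wrapL {G : GType} {V : LBTm v Γ G} {N : LBTm v Γ' A'} {ℓ : Label}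
    {c : Consis G .unk} (i : LBInert v (.mk G .unk ℓ c)) (p : TyPrec G A')
    (hV : LBValue v V) (h : Out V N) : Out (.wrap V _ i) N := by
  rcases h.of_val hV with h | ⟨W, r, hW, s⟩
  · exact .inl h
  · exact (Out.val (.wrap hV) hW (.wrapL hV (.inj i.ground p) s)).anti .refl r

theorem castR_below (m : ℕ) : CastRBelow v Γ Γ' m := by
  induction m with
  | zero => intro A A' B' V W ℓ h hA; omega
  | succ m ih =>
    intro A A' B' V W ℓ h hA hB p q hV hW r
    have gA := nodes_gnd A'
    have gB := nodes_gnd B'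
    by_cases nA : A' = .unk
    · subst nA
      obtain rfl := p.to_unk
      by_cases nB : B' = .unk
      · subst nB
        exact (Out.val hV hW r).anti .refl (.single (.castId h hW .unk))
      · obtain ⟨G, ℓ₁, ℓ₂, c, c', i, i', V₁, W₁, rfl, rfl, g, hV₁, hW₁, r₁⟩ :=
          canon_unk_unk hV hW r
        by_cases gB' : Ground B'
        · by_cases e : B' = G
          · subst e
            exact (Out.wrapL i (.rfl' _) hV₁ (Out.val hV₁ hW₁ r₁)).anti .refl
              (.single (.castProjEq c' h i' hW₁ g))
          · exact .inl ⟨ℓ, .single (.castProjNeq c' h i' hW₁ g gB' e)⟩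
        · have s := LBRed.castProjGnd (ℓ₂ := ℓ) c' h i' hW₁ g nB gB'
          have nG := gnd_ground nB
          by_cases e : gnd B' = G
          · subst e
            have key : Out V₁ (.cast W₁ (.mk (gnd B') B' ℓ (consisGndR B'))) :=
              castR_cross ih _ (by omega) hB g.ne_unk (.rfl' _) (gnd_prec B') hV₁ hW₁ r₁
            refine (Out.wrapL i (gnd_prec B') hV₁ key).anti .refl (.trans (.single s) ?_)
            exact .single (red_cast _ (.castProjEq c' _ i' hW₁ nG))
          · refine .inl ⟨ℓ, .trans (.single s) ?_⟩
            exact reds_cast_blame _ (.single (.castProjNeq c' _ i' hW₁ g nG e))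
    · by_cases nU : A = .unk
      · subst nU
        obtain ⟨ℓ', c, i, V₁, rfl, hV₁, r₁⟩ := canon_unk hV hW r nA rfl
        have g := gnd_ground nA
        have gp := gnd_prec A'
        by_cases nB : B' = .unk
        · subst nB
          by_cases gA' : Ground A'
          · have e := gA'.gnd_self
            revert V₁ c i
            rw [e]
            intro c i V₁ hV r hV₁ r₁
            exact (Out.val hV (.wrap (i := .inj v gA') hW)
              (.wrap hV₁ hW (.inj gA') r₁ id)).anti .refl (.single (.wrap _ hW))
          · have key : Out V₁ (.cast W (.mk A' (gnd A') ℓ (consisGnd A'))) :=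
              castR_cross ih _ hA (by omega) g.ne_unk gp (.rfl' _) hV₁ hW r₁
            have s := LBRed.castInj (ℓ := ℓ) h hW nA gA'
            rcases key.of_val hV₁ with ⟨ℓ, k⟩ | ⟨W', k, hW', r'⟩
            · exact .inl ⟨ℓ, .trans (.single s) (reds_cast_blame _ k)⟩
            · refine (Out.val hV (.wrap (c := .mk (gnd A') .unk ℓ (.unkR _)) (i := .inj v g) hW')
                (.wrap hV₁ hW' (.inj g) r' id)).anti .refl (.trans (.single s) ?_)
              exact .trans (reds_cast _ k) (.single (.wrap _ hW'))
        · have e : gnd A' = gnd B' := by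
            cases h <;> first | rfl | exact absurd rfl nA | exact absurd rfl nB
          have gp' : TyPrec (gnd A') B' := e ▸ gnd_prec B'
          exact Out.wrapL i gp' hV₁ (castR_cross ih h hA hB g.ne_unk gp gp' hV₁ hW r₁)
      · exact castR_cross ih h hA hB nU p q hV hW r

/-- Casting the more precise of two related values. -/
theorem castR {V : LBTm v Γ A} {W : LBTm v Γ' A'} {ℓ : Label} (h : Consis A' B')
    (p : TyPrec A A') (q : TyPrec A B') (hV : LBValue v V) (hW : LBValue v W)
    (r : SimRel v V W) : Out V (.cast W (.mk A' B' ℓ h)) :=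
  castR_below (A'.nodes + B'.nodes + 1) A A' B' V W ℓ h (by omega) (by omega) p q hV hW r

/-- Casting both of two related values. When `A` or `B` is `?` the two casts are performed one after
the other, since the intermediate types are still related; otherwise they are casts of the same
shape. -/
theorem castB {V : LBTm v Γ A} {W : LBTm v Γ' A'} {ℓ ℓ' : Label} (h : Consis A B)
    (h' : Consis A' B') (p : TyPrec A A') (q : TyPrec B B') (hV : LBValue v V)
    (hW : LBValue v W) (r : SimRel v V W) :
    Out (.cast V (.mk A B ℓ h)) (.cast W (.mk A' B' ℓ' h')) := by
  induction p generalizing B B' with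
  | unk A' =>
    refine Out.bindL (.cast (.mk .unk B ℓ h)) (castR h' (.unk _) (.unk _) hV hW r) ?_
    intro V' W' _ _ hV' hW' r'
    exact castL h (.unk _) q hV' hW' r'
  | base b =>
    cases q with
    | unk B' =>
      refine Out.bindR (.cast (.mk _ B' ℓ' h')) (castL h (.base b) (.unk _) hV hW r) ?_
      intro V' W' _ _ hV' hW' r'
      exact castR h' (.unk _) (.unk _) hV' hW' r'
    | base =>
      cases h
      exact (Out.val hV hW r).anti (.single (.castId _ hV (.base _))) (.single (.castId _ hW (.base _)))
    | _ => cases h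
  | arr p₁ p₂ =>
    cases q with
    | unk B' =>
      refine Out.bindR (.cast (.mk _ B' ℓ' h')) (castL h (.arr p₁ p₂) (.unk _) hV hW r) ?_
      intro V' W' _ _ hV' hW' r'
      exact castR h' (.unk _) (.unk _) hV' hW' r'
    | arr q₁ q₂ =>
      exact (Out.val (.wrap (i := .arr v) hV) (.wrap (i := .arr v) hW)
        (.wrap hV hW (.arr (.arr p₁ p₂) (.arr q₁ q₂)) r nofun)).anti
        (.single (.wrap _ hV)) (.single (.wrap _ hW))
    | _ => cases h
  | prod p₁ p₂ ih₁ ih₂ =>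
    cases q with
    | unk B' =>
      refine Out.bindR (.cast (.mk _ B' ℓ' h')) (castL h (.prod p₁ p₂) (.unk _) hV hW r) ?_
      intro V' W' _ _ hV' hW' r'
      exact castR h' (.unk _) (.unk _) hV' hW' r'
    | prod q₁ q₂ =>
      cases v with
      | v1 =>
        exact (Out.val (.wrap (i := .prod) hV) (.wrap (i := .prod) hW)
          (.wrap hV hW (.prod (.prod p₁ p₂) (.prod q₁ q₂)) r nofun)).anti
          (.single (.wrap _ hV)) (.single (.wrap _ hW))
      | v2 =>
        obtain ⟨V₁, V₂, W₁, W₂, rfl, rfl, a, b, c, d, r, s⟩ := canon_prod hV hW r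
        refine Out.anti (Out.cons ?_ ?_) (.single (.castPairV2 h hV))
          (.single (.castPairV2 h' hW))
        · exact (ih₁ _ _ q₁ a c r).anti (reds_castFst a b _) (reds_castFst c d _)
        · exact (ih₂ _ _ q₂ b d s).anti (reds_castSnd a b _) (reds_castSnd c d _)
    | _ => cases h
  | sum p₁ p₂ ih₁ ih₂ =>
    cases q with
    | unk B' =>
      refine Out.bindR (.cast (.mk _ B' ℓ' h')) (castL h (.sum p₁ p₂) (.unk _) hV hW r) ?_
      intro V' W' _ _ hV' hW' r'
      exact castR h' (.unk _) (.unk _) hV' hW' r'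
    | sum q₁ q₂ =>
      cases v with
      | v1 =>
        exact (Out.val (.wrap (i := .sum) hV) (.wrap (i := .sum) hW)
          (.wrap hV hW (.sum (.sum p₁ p₂) (.sum q₁ q₂)) r nofun)).anti
          (.single (.wrap _ hV)) (.single (.wrap _ hW))
      | v2 =>
        rcases canon_sum hV hW r with ⟨V₁, W₁, rfl, rfl, a, c, r⟩ | ⟨V₁, W₁, rfl, rfl, a, c, r⟩
        · exact Out.anti (Out.injL q₂ (ih₁ _ _ q₁ a c r)) (reds_castInl a h) (reds_castInl c h')
        · exact Out.anti (Out.injR q₁ (ih₂ _ _ q₂ a c r)) (reds_castInr a h) (reds_castInr c h')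
    | _ => cases h

end

/-! ### Elimination forms preserve the simulation -/

/-- The number of wraps at the head of a term. -/
def wd {v : LBVariant} : ∀ {Γ : List GType} {A : GType}, LBTm v Γ A → ℕ
  | _, _, .wrap M _ _ => wd M + 1
  | _, _, _ => 0

section
variable {v : LBVariant} {Γ Γ' : List GType}

theorem Out.cast {A A' B B' : GType} {M : LBTm v Γ A} {N : LBTm v Γ' A'} {c : LBCast A B}
    {c' : LBCast A' B'} (p : TyPrec A A') (q : TyPrec B B') (h : Out M N) :
    Out (.cast M c) (.cast N c') := by
  refine Out.bind (.cast c) (.cast c') h fun V W _ _ hV hW r => ?_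
  cases c; cases c'
  exact castB _ _ p q hV hW r

theorem Out.castL {A A' B : GType} {M : LBTm v Γ A} {N : LBTm v Γ' A'} {c : LBCast A B}
    (p : TyPrec A A') (q : TyPrec B A') (h : Out M N) : Out (.cast M c) N := by
  refine Out.bindL (.cast c) h fun V W _ _ hV hW r => ?_
  cases c
  exact _root_.castL _ p q hV hW r

theorem Out.castR {A A' B' : GType} {M : LBTm v Γ A} {N : LBTm v Γ' A'} {c' : LBCast A' B'}
    (p : TyPrec A A') (q : TyPrec A B') (h : Out M N) : Out M (.cast N c') := by
  refine Out.bindR (.cast c') h fun V W _ _ hV hW r => ?_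
  cases c'
  exact _root_.castR _ p q hV hW r

theorem HE.uncast {n : ℕ} {A A' B B' : GType} {M : LBTm v Γ A} {N : LBTm v Γ' A'}
    {c : LBCast A B} {c' : LBCast A' B'} (h : HE n (.cast M c) (.cast N c')) : HE n M N :=
  HE.unplug (F := .cast c) (F' := .cast c') h

theorem HE.uncastL {n : ℕ} {A A' B : GType} {M : LBTm v Γ A} {N : LBTm v Γ' A'}
    {c : LBCast A B} (h : HE n (.cast M c) N) : HE n M N :=
  HE.unplugL (F := .cast c) h

theorem HE.uncastR {n : ℕ} {A A' B' : GType} {M : LBTm v Γ A} {N : LBTm v Γ' A'}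
    {c' : LBCast A' B'} (h : HE n M (.cast N c')) : HE n M N :=
  HE.unplugR (F' := .cast c') h

/-- Related values of base type are the same constant. -/
theorem canon_base {b b' : BaseTy} {V : LBTm v Γ (.base b)} {W : LBTm v Γ' (.base b')}
    (hV : LBValue v V) (hW : LBValue v W) (h : SimRel v V W) :
    ∃ (e : b = b') (k : b.rep), V = .const (.base b) k ∧ W = .const (.base b') (e ▸ k) := by
  cases hV with
  | wrap _ => rename_i i; cases i
  | @const _ p k =>
    cases hW with
    | wrap _ => rename_i i; cases i
    | const =>
      cases h
      cases p
      exact ⟨rfl, k, rfl, rfl⟩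

/-- Projections from related pairs, by induction on a bound `n` for the number of outer wraps. No
step bound is needed, because the components of a value are values. -/
theorem out_proj (n : ℕ) : ∀ {A A' B B' : GType} (V : LBTm v Γ (.prod A B))
    (W : LBTm v Γ' (.prod A' B')), wd V + wd W < n → LBValue v V → LBValue v W →
    SimRel v V W → Out (.fst V) (.fst W) ∧ Out (.snd V) (.snd W) := by
  induction n with
  | zero => intro A A' B B' V W hn; omega
  | succ n ih =>
    intro A A' B B' V W hn hV hW r
    cases r with
    | const p k => cases p
    | cons r s =>
      cases hV with
      | pair h₁ h₂ =>
        cases hW with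
        | pair h₃ h₄ =>
          exact ⟨(Out.val h₁ h₃ r).anti (.single (.betaFst h₁ h₂)) (.single (.betaFst h₃ h₄)),
            (Out.val h₂ h₄ s).anti (.single (.betaSnd h₁ h₂)) (.single (.betaSnd h₃ h₄))⟩
    | wrap h₁ h₂ c r e =>
      obtain _ | _ | ⟨⟨⟩ | ⟨⟩ | ⟨⟩ | ⟨p₁, p₂⟩, ⟨⟩ | ⟨⟩ | ⟨⟩ | ⟨q₁, q₂⟩⟩ := c
      obtain ⟨k₁, k₂⟩ := ih _ _ (by simp only [wd] at hn; omega) h₁ h₂ r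
      exact ⟨(k₁.cast p₁ q₁).anti (.single (.fstCast _ _ h₁)) (.single (.fstCast _ _ h₂)),
        (k₂.cast p₂ q₂).anti (.single (.sndCast _ _ h₁)) (.single (.sndCast _ _ h₂))⟩
    | wrapL h₁ c r =>
      obtain _ | _ | ⟨⟨⟩ | ⟨⟩ | ⟨⟩ | ⟨p₁, p₂⟩, ⟨⟩ | ⟨⟩ | ⟨⟩ | ⟨q₁, q₂⟩⟩ := c
      obtain ⟨k₁, k₂⟩ := ih _ _ (by simp only [wd] at hn; omega) h₁ hW r
      exact ⟨(k₁.castL p₁ q₁).anti (.single (.fstCast _ _ h₁)) .refl,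
        (k₂.castL p₂ q₂).anti (.single (.sndCast _ _ h₁)) .refl⟩
    | wrapR h₂ c r e =>
      obtain _ | ⟨⟨⟩ | ⟨⟩ | ⟨⟩ | ⟨p₁, p₂⟩, ⟨⟩ | ⟨⟩ | ⟨⟩ | ⟨q₁, q₂⟩⟩ := c
      obtain ⟨k₁, k₂⟩ := ih _ _ (by simp only [wd] at hn; omega) hV h₂ r
      exact ⟨(k₁.castR p₁ q₁).anti .refl (.single (.fstCast _ _ h₂)),
        (k₂.castR p₂ q₂).anti .refl (.single (.sndCast _ _ h₂))⟩
    | var => cases hV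
    | app => cases hV
    | ite => cases hV
    | fst => cases hV
    | snd => cases hV
    | case => cases hV
    | cast => cases hV
    | castL => cases hV
    | castR => cases hW
    | blame => cases hW

/-- The simulation property for pairs of related terms one of which halts within `m` steps. -/
def PP (v : LBVariant) (m : ℕ) : Prop :=
  ∀ {Γ Γ' : List GType} {A A' : GType} {M : LBTm v Γ A} {N : LBTm v Γ' A'},
    SimRel v M N → HE m M N → Out M N

/-- Application of related functions to related arguments. The induction is on a bound `d` for the
number of outer wraps; peeling a wrap keeps the step bound `n`, and a β-step lowers it, so that
`hP` applies. -/
theorem out_app {n : ℕ} (hP : ∀ m, m < n → PP v m) (d : ℕ) :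
    ∀ {A A' B B' : GType} (V : LBTm v Γ (.arr A B)) (W : LBTm v Γ' (.arr A' B'))
      (X : LBTm v Γ A) (Y : LBTm v Γ' A'), wd V + wd W < d → LBValue v V → LBValue v W →
      LBValue v X → LBValue v Y → SimRel v V W → SimRel v X Y → HE n (.app V X) (.app W Y) →
      Out (.app V X) (.app W Y) := by
  induction d with
  | zero => intro A A' B B' V W X Y hn; omega
  | succ d ih =>
    intro A A' B B' V W X Y hn hV hW hX hY r s hH
    cases r with
    | const p k =>
      cases p with
      | fn b p =>
        obtain ⟨_, k', rfl, rfl⟩ := canon_base hX hY s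
        exact (Out.val .const .const (.const p _)).anti (.single (.delta p k k'))
          (.single (.delta p k k'))
    | lam p r =>
      obtain ⟨m, hm, hH'⟩ := hH.steps (.beta hX) (.beta hY)
      exact (hP m hm (r.subst1 s) hH').anti (.single (.beta hX)) (.single (.beta hY))
    | @wrap _ _ _ _ _ _ V₁ W₁ _ _ i i' h₁ h₂ c r e =>
      obtain _ | ⟨⟨⟩ | ⟨⟩ | ⟨p₁, p₂⟩, ⟨⟩ | ⟨⟩ | ⟨q₁, q₂⟩⟩ := c
      have k := LBRed.funCast _ i h₁ hX
      have k' := LBRed.funCast _ i' h₂ hY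
      have hH' := HE.uncast (hH.reds (.single k) (.single k'))
      refine (Out.cast p₂ q₂ ?_).anti (.single k) (.single k')
      refine Out.bind (.appR V₁ h₁) (.appR W₁ h₂) ((Out.val hX hY s).cast q₁ p₁) ?_
      intro X' Y' kX kY hX' hY' s'
      exact ih _ _ _ _ (by simp only [wd] at hn; omega) h₁ h₂ hX' hY' r s'
        (hH'.reds (reds_plug (.appR V₁ h₁) kX) (reds_plug (.appR W₁ h₂) kY))
    | @wrapL _ _ _ _ _ V₁ _ _ i h₁ c r =>
      obtain _ | ⟨⟨⟩ | ⟨⟩ | ⟨p₁, p₂⟩, ⟨⟩ | ⟨⟩ | ⟨q₁, q₂⟩⟩ := c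
      have k := LBRed.funCast _ i h₁ hX
      have hH' := HE.uncastL (hH.reds (.single k) .refl)
      refine (Out.castL p₂ q₂ ?_).anti (.single k) .refl
      refine Out.bind (.appR V₁ h₁) (.appR W hW) ((Out.val hX hY s).castL q₁ p₁) ?_
      intro X' Y' kX kY hX' hY' s'
      exact ih _ _ _ _ (by simp only [wd] at hn; omega) h₁ hW hX' hY' r s'
        (hH'.reds (reds_plug (.appR V₁ h₁) kX) (reds_plug (.appR W hW) kY))
    | @wrapR _ _ _ _ _ _ W₁ _ i' h₂ c r e =>
      obtain ⟨⟨⟩ | ⟨⟩ | ⟨p₁, p₂⟩, ⟨⟩ | ⟨⟩ | ⟨q₁, q₂⟩⟩ := c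
      have k' := LBRed.funCast _ i' h₂ hY
      have hH' := HE.uncastR (hH.reds .refl (.single k'))
      refine (Out.castR p₂ q₂ ?_).anti .refl (.single k')
      refine Out.bind (.appR V hV) (.appR W₁ h₂) ((Out.val hX hY s).castR q₁ p₁) ?_
      intro X' Y' kX kY hX' hY' s'
      exact ih _ _ _ _ (by simp only [wd] at hn; omega) hV h₂ hX' hY' r s'
        (hH'.reds (reds_plug (.appR V hV) kX) (reds_plug (.appR W₁ h₂) kY))
    | var => cases hV
    | app => cases hV
    | ite => cases hV
    | fst => cases hV
    | snd => cases hV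
    | case => cases hV
    | cast => cases hV
    | castL => cases hV
    | castR => cases hW
    | blame => cases hW

/-- Case analysis on related sums, organized like `out_app`. Peeling a wrap moves its component
casts into the branches, which is why the branches vary in the induction. -/
theorem out_case {n : ℕ} (hP : ∀ m, m < n → PP v m) {C C' : GType} (d : ℕ) :
    ∀ {A A' B B' : GType} (V : LBTm v Γ (.sum A B)) (W : LBTm v Γ' (.sum A' B'))
      (M : LBTm v (A :: Γ) C) (M' : LBTm v (A' :: Γ') C')
      (N : LBTm v (B :: Γ) C) (N' : LBTm v (B' :: Γ') C'),
      wd V + wd W < d → LBValue v V → LBValue v W → SimRel v V W → SimRel v M M' →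
      SimRel v N N' → HE n (.case V M N) (.case W M' N') →
      Out (.case V M N) (.case W M' N') := by
  induction d with
  | zero => intro A A' B B' V W M M' N N' hn; omega
  | succ d ih =>
    intro A A' B B' V W M M' N N' hn hV hW r s t hH
    cases r with
    | const p k => cases p
    | inl p r =>
      cases hV with
      | inl hV =>
        cases hW with
        | inl hW =>
          obtain ⟨m, hm, hH'⟩ := hH.steps (.caseL hV) (.caseL hW)
          exact (hP m hm (s.subst1 r) hH').anti (.single (.caseL hV)) (.single (.caseL hW))
    | inr p r =>
      cases hV with
      | inr hV =>
        cases hW with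
        | inr hW =>
          obtain ⟨m, hm, hH'⟩ := hH.steps (.caseR hV) (.caseR hW)
          exact (hP m hm (t.subst1 r) hH').anti (.single (.caseR hV)) (.single (.caseR hW))
    | @wrap _ _ _ _ _ _ V₁ W₁ _ _ i i' h₁ h₂ c r e =>
      obtain _ | _ | _ | ⟨⟨⟩ | ⟨⟩ | ⟨⟩ | ⟨⟩ | ⟨p₁, p₂⟩, ⟨⟩ | ⟨⟩ | ⟨⟩ | ⟨⟩ | ⟨q₁, q₂⟩⟩ := c
      have k := LBRed.caseCast (M := M) (N := N) _ i h₁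
      have k' := LBRed.caseCast (M := M') (N := N') _ i' h₂
      exact (ih _ _ _ _ _ _ (by simp only [wd] at hn; omega) h₁ h₂ r (s.castVar p₁ q₁)
        (t.castVar p₂ q₂) (hH.reds (.single k) (.single k'))).anti (.single k) (.single k')
    | @wrapL _ _ _ _ _ V₁ _ _ i h₁ c r =>
      obtain _ | _ | _ | ⟨⟨⟩ | ⟨⟩ | ⟨⟩ | ⟨⟩ | ⟨p₁, p₂⟩, ⟨⟩ | ⟨⟩ | ⟨⟩ | ⟨⟩ | ⟨q₁, q₂⟩⟩ := c
      have k := LBRed.caseCast (M := M) (N := N) _ i h₁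
      exact (ih _ _ _ _ _ _ (by simp only [wd] at hn; omega) h₁ hW r (s.castVarL p₁ q₁)
        (t.castVarL p₂ q₂) (hH.reds (.single k) .refl)).anti (.single k) .refl
    | @wrapR _ _ _ _ _ _ W₁ _ i' h₂ c r e =>
      obtain _ | _ | ⟨⟨⟩ | ⟨⟩ | ⟨⟩ | ⟨⟩ | ⟨p₁, p₂⟩, ⟨⟩ | ⟨⟩ | ⟨⟩ | ⟨⟩ | ⟨q₁, q₂⟩⟩ := c
      have k' := LBRed.caseCast (M := M') (N := N') _ i' h₂
      exact (ih _ _ _ _ _ _ (by simp only [wd] at hn; omega) hV h₂ r (s.castVarR p₁ q₁)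
        (t.castVarR p₂ q₂) (hH.reds .refl (.single k'))).anti .refl (.single k')
    | var => cases hV
    | app => cases hV
    | ite => cases hV
    | fst => cases hV
    | snd => cases hV
    | case => cases hV
    | cast => cases hV
    | castL => cases hV
    | castR => cases hW
    | blame => cases hW

/-! ### The simulation theorem -/

/-- Related terms, one of which halts, have a joint outcome. -/
theorem simulation (v : LBVariant) (n : ℕ) : PP v n := by
  induction n using Nat.strong_induction_on with
  | _ n hP =>
  intro Γ Γ' A A' M N r
  induction r with
  | const p k => exact fun _ => .val .const .const (.const p k)
  | var x x' => exact fun _ => .inr (.inr ⟨⟨_, .refl, .var x⟩, ⟨_, .refl, .var x'⟩⟩)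
  | lam p r => exact fun _ => .val .lam .lam (.lam p r)
  | @app _ _ _ _ _ _ L L' M M' _ _ ih₁ ih₂ =>
    intro h
    refine Out.bind (.appL M) (.appL M') (ih₁ (HE.unplug (F := .appL M) (F' := .appL M') h)) ?_
    intro V W k k' hV hW r
    have h' : HE n (.app V M) (.app W M') :=
      h.reds (reds_plug (.appL M) k) (reds_plug (.appL M') k')
    refine Out.bind (.appR V hV) (.appR W hW)
      (ih₂ (HE.unplug (F := .appR V hV) (F' := .appR W hW) h')) ?_
    intro X Y k k' hX hY s
    exact out_app hP _ V W X Y (Nat.lt_succ_self _) hV hW hX hY r s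
      (h'.reds (reds_plug (.appR V hV) k) (reds_plug (.appR W hW) k'))
  | @ite _ _ _ _ L L' M N M' N' _ _ _ ih₁ ih₂ ih₃ =>
    intro h
    refine Out.bind (.ite M N) (.ite M' N')
      (ih₁ (HE.unplug (F := .ite M N) (F' := .ite M' N') h)) ?_
    intro V W k k' hV hW r
    have h' : HE n (.ite V M N) (.ite W M' N') :=
      h.reds (reds_plug (.ite M N) k) (reds_plug (.ite M' N') k')
    obtain ⟨_, b, rfl, rfl⟩ := canon_base hV hW r
    cases b with
    | true =>
      exact (ih₂ (h'.reds (.single .ifTrue) (.single .ifTrue))).anti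
        (.single .ifTrue) (.single .ifTrue)
    | false =>
      exact (ih₃ (h'.reds (.single .ifFalse) (.single .ifFalse))).anti
        (.single .ifFalse) (.single .ifFalse)
  | @cons _ _ _ _ _ _ M M' N N' _ _ ih₁ ih₂ =>
    intro h
    refine Out.bind (.consL N) (.consL N')
      (ih₁ (HE.unplug (F := .consL N) (F' := .consL N') h)) ?_
    intro V W k k' hV hW r
    have h' : HE n (.cons V N) (.cons W N') :=
      h.reds (reds_plug (.consL N) k) (reds_plug (.consL N') k')
    exact (Out.val hV hW r).cons (ih₂ (HE.unplug (F := .consR V hV) (F' := .consR W hW) h'))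
  | fst _ ih =>
    intro h
    refine Out.bind .fst .fst (ih (HE.unplug (F := .fst) (F' := .fst) h)) ?_
    intro V W _ _ hV hW r
    exact (out_proj _ V W (Nat.lt_succ_self _) hV hW r).1
  | snd _ ih =>
    intro h
    refine Out.bind .snd .snd (ih (HE.unplug (F := .snd) (F' := .snd) h)) ?_
    intro V W _ _ hV hW r
    exact (out_proj _ V W (Nat.lt_succ_self _) hV hW r).2
  | @inl _ _ _ _ B B' _ _ p _ ih =>
    exact fun h => .injL p (ih (HE.unplug (F := .inl B) (F' := .inl B') h))
  | @inr _ _ A A' _ _ _ _ p _ ih =>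
    exact fun h => .injR p (ih (HE.unplug (F := .inr A) (F' := .inr A') h))
  | @case _ _ _ _ _ _ _ _ L L' M M' N N' _ _ _ s t ih _ _ =>
    intro h
    refine Out.bind (.case M N) (.case M' N')
      (ih (HE.unplug (F := .case M N) (F' := .case M' N') h)) ?_
    intro V W k k' hV hW r
    exact out_case hP _ V W M M' N N' (Nat.lt_succ_self _) hV hW r s t
      (h.reds (reds_plug (.case M N) k) (reds_plug (.case M' N') k'))
  | cast p q _ ih => exact fun h => (ih h.uncast).cast p q
  | castL p q _ ih => exact fun h => (ih h.uncastL).castL p q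
  | castR p q _ ih => exact fun h => (ih h.uncastR).castR p q
  | wrap hV hW c r e => exact fun _ => .val (.wrap hV) (.wrap hW) (.wrap hV hW c r e)
  | wrapL hV c _ ih =>
    intro _
    rcases (ih (.inl (.irr hV.irred))).of_val hV with h | ⟨W, k, hW, r⟩
    · exact .inl h
    · exact (Out.val (.wrap hV) hW (.wrapL hV c r)).anti .refl k
  | wrapR hW c _ e ih =>
    intro _
    rcases ih (.inr (.irr hW.irred)) with ⟨ℓ, h⟩ | ⟨V, W', h₁, h₂, h₃, h₄, r⟩ | ⟨_, ⟨S, h₁, h₂⟩⟩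
    · cases hW.irred.reds h
      cases hW
    · cases hW.irred.reds h₂
      exact (Out.val h₃ (.wrap hW) (.wrapR hW c r e)).anti h₁ .refl
    · cases hW.irred.reds h₁
      exact absurd hW h₂.2.1
  | blame p => exact fun _ => .inl ⟨_, .refl⟩

end

/-- Dynamic Gradual Guarantee for λB′ (Theorem 5.29, both variants). -/
theorem dynamic_gradual_guarantee (v : LBVariant) {Γ : List GType} {A B : GType}
    (M : GTerm Γ A) (N : GTerm Γ B) (hMN : GPrec M N) :
    -- (1) if 𝒞'[N] reduces to a value W, then 𝒞'[M] reduces to a value V with V ⊑C W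
    ((∀ W : LBTm v Γ B, LBReds v (compile v N) W → LBValue v W →
        ∃ V : LBTm v Γ A, LBReds v (compile v M) V ∧ LBValue v V ∧ TPrec v V W)
    -- (2) if 𝒞'[N] diverges, so does 𝒞'[M]
  ∧ (LBDiverges v (compile v N) → LBDiverges v (compile v M))
    -- (3) if 𝒞'[M] reduces to a value, then 𝒞'[N] reduces to a related value or blames
  ∧ (∀ V : LBTm v Γ A, LBReds v (compile v M) V → LBValue v V →
        (∃ W : LBTm v Γ B, LBReds v (compile v N) W ∧ LBValue v W ∧ TPrec v V W)
      ∨ (∃ ℓ : Label, LBReds v (compile v N) (.blame B ℓ)))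
    -- (4) if 𝒞'[M] diverges, then 𝒞'[N] diverges or blames
  ∧ (LBDiverges v (compile v M) →
        LBDiverges v (compile v N) ∨ ∃ ℓ : Label, LBReds v (compile v N) (.blame B ℓ))) := by
  have R : SimRel v (compile v M) (compile v N) := compile_rel v hMN (CtxPrec.rfl' Γ)
  refine ⟨fun W k hW => ?_, fun hd => ?_, fun V k hV => ?_, fun hd => ?_⟩
  · obtain ⟨n, hn⟩ := halts_of_reds k hW.irred
    rcases simulation v n R (.inr hn) with ⟨ℓ, h⟩ | ⟨V, W', h₁, h₂, h₃, h₄, r⟩ | ⟨_, ⟨S, h₁, h₂⟩⟩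
    · cases irred_unique k h hW.irred irred_blame
      cases hW
    · cases irred_unique k h₂ hW.irred h₄.irred
      exact ⟨V, h₁, h₃, r.toTPrec⟩
    · cases irred_unique k h₁ hW.irred h₂.1
      exact absurd hW h₂.2.1
  · rcases halts_or_diverges (compile v M) with ⟨n, hn⟩ | h
    · have key : ∃ m, Halts m (compile v N) := by
        rcases simulation v n R (.inl hn) with ⟨ℓ, h⟩ | ⟨V, W, h₁, h₂, h₃, h₄, r⟩ | ⟨_, ⟨S, h₁, h₂⟩⟩
        · exact halts_of_reds h irred_blame
        · exact halts_of_reds h₂ h₄.irred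
        · exact halts_of_reds h₁ h₂.1
      obtain ⟨m, hm⟩ := key
      exact absurd hd hm.not_diverges
    · exact h
  · obtain ⟨n, hn⟩ := halts_of_reds k hV.irred
    rcases simulation v n R (.inl hn) with h | ⟨V', W, h₁, h₂, h₃, h₄, r⟩ | ⟨⟨S, h₁, h₂⟩, _⟩
    · exact .inr h
    · cases irred_unique k h₁ hV.irred h₃.irred
      exact .inl ⟨W, h₂, h₄, r.toTPrec⟩
    · cases irred_unique k h₁ hV.irred h₂.1
      exact absurd hV h₂.2.1
  · rcases halts_or_diverges (compile v N) with ⟨n, hn⟩ | h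
    · rcases simulation v n R (.inr hn) with h | ⟨V, W, h₁, h₂, h₃, h₄, r⟩ | ⟨⟨S, h₁, h₂⟩, _⟩
      · exact .inr h
      · obtain ⟨m, hm⟩ := halts_of_reds h₁ h₃.irred
        exact absurd hd hm.not_diverges
      · obtain ⟨m, hm⟩ := halts_of_reds h₁ h₂.1
        exact absurd hd hm.not_diverges
    · exact .inl h
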